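/- arXiv:0807.4334 — 13 statements merged into one kernel-verified Lean document; each statement's English description precedes it below -/
import Mathlib

section
/- Let R be a commutative ring, n ≥ 0 an integer, u_0,…,u_n, v_0,…,v_n, w elements of R, and ε ∈ {1,−1}. If in the polynomial ring R[Y] one has ∏_{i=0}^{n} (εY + w + v_i) = ε^{n+1} · ∏_{i=0}^{n} (Y + u_i), then ∏_{i=0}^{n} (1 + (εY + w + v_i)^2) = ∏_{i=0}^{n} (1 + (Y + u_i)^2) in R[Y]. -/
theorem sqrt_neg_one_exists (A : Type*) [CommRing A] :
    ∃ j : QuadraticAlgebra A (-1) 0, j * j = -1 :=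
  ⟨⟨0, 1⟩, by ext <;> simp <;> rfl⟩

/-- If `∏ (εY + w + vᵢ) = ε^{n+1} ∏ (Y + uᵢ)` in `R[Y]` with `ε = ±1`,
then `∏ (1 + (εY + w + vᵢ)²) = ∏ (1 + (Y + uᵢ)²)` in `R[Y]`. -/
theorem stmt0 (R : Type*) [CommRing R] (n : ℕ) (u v : Fin (n + 1) → R) (w ε : R)
    (hε : ε = 1 ∨ ε = -1)
    (h : ∏ i, (Polynomial.C ε * Polynomial.X + Polynomial.C (w + v i)) =
      Polynomial.C (ε ^ (n + 1)) * ∏ i, (Polynomial.X + Polynomial.C (u i))) :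
    ∏ i, (1 + (Polynomial.C ε * Polynomial.X + Polynomial.C (w + v i)) ^ 2) =
      ∏ i, (1 + (Polynomial.X + Polynomial.C (u i)) ^ 2) := by
  have hε2 : ε * ε = 1 := by rcases hε with rfl | rfl <;> simp
  let B := QuadraticAlgebra (Polynomial R) (-1) 0
  let φ : Polynomial R →+* B := algebraMap (Polynomial R) B
  have hφ : Function.Injective φ := fun x y hxy => by
    have := congrArg QuadraticAlgebra.re hxy
    simpa [φ, B] using this
  obtain ⟨j, hj⟩ : ∃ j : B, j * j = -1 := sqrt_neg_one_exists _
  let e : R →+* B := φ.comp Polynomial.C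
  have he2 : e ε * e ε = 1 := by rw [← map_mul, hε2, map_one]
  have key : ∀ t : B, ∏ i, (e ε * (φ Polynomial.X + t) + e (w + v i)) =
      e ε ^ (n + 1) * ∏ i, ((φ Polynomial.X + t) + e (u i)) := fun t => by
    have := congrArg (Polynomial.eval₂RingHom e (φ Polynomial.X + t)) h
    simpa only [map_prod, map_mul, map_add, map_pow, Polynomial.coe_eval₂RingHom,
      Polynomial.eval₂_C, Polynomial.eval₂_X] using this
  have eC : ∀ r, φ (Polynomial.C r) = e r := fun _ => rfl
  apply hφ
  simp only [map_prod, map_mul, map_add, map_pow, map_one, eC] at key ⊢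
  have h1 := congrArg₂ (· * ·) (key j) (key (-j))
  beta_reduce at h1
  rw [mul_mul_mul_comm, ← mul_pow, he2, one_pow, one_mul, ← Finset.prod_mul_distrib,
    ← Finset.prod_mul_distrib] at h1
  convert h1 using 2
  · linear_combination (-1 : B) * he2 + (e ε * e ε) * hj
  · linear_combination hj
end

section
/- Let m ≥ 1, let n_1,…,n_m be positive integers, and let A_m be the generalized Bott ring determined by integers a^{(i)}_{l,j}. Consider the set S of all elements of the form b·ȳ_m + w̄, where b is a nonzero integer, w̄ lies in the ℤ-span of ȳ_1,…,ȳ_{m−1}, and (b·ȳ_m + w̄)^{n_m+1} = 0 in A_m. Then any two elements z, z′ of S are ℤ-linearly dependent: there exist integers s, t, not both zero, with s·z = t·z′ in A_m. (That is, S lies in a one-dimensional subspace of the degree-2 part of A_m.) -/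
open MvPolynomial

/-- The defining relation `f_i = y_i ∏_{l=1}^{n_i} (y_i + ∑_{j<i} a^{(i)}_{l,j} y_j)`
of a generalized Bott tower. -/
noncomputable def bottRel (m : ℕ) (n : Fin m → ℕ)
    (a : (i : Fin m) → Fin (n i) → Fin m → ℤ) (i : Fin m) : MvPolynomial (Fin m) ℤ :=
  X i * ∏ l : Fin (n i),
    (X i + ∑ j ∈ Finset.univ.filter (fun j => j < i), C (a i l j) * X j)

/-- The generalized Bott ring `A_m = ℤ[y_1,…,y_m]/(f_1,…,f_m)`, the integral
cohomology ring of an `m`-stage generalized Bott manifold. -/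
abbrev BottRing (m : ℕ) (n : Fin m → ℕ)
    (a : (i : Fin m) → Fin (n i) → Fin m → ℤ) : Type :=
  MvPolynomial (Fin m) ℤ ⧸ Ideal.span (Set.range (bottRel m n a))

/-- `ȳ_i`, the class of `y_i` in the generalized Bott ring. -/
noncomputable def ybar (m : ℕ) (n : Fin m → ℕ)
    (a : (i : Fin m) → Fin (n i) → Fin m → ℤ) (i : Fin m) : BottRing m n a :=
  Ideal.Quotient.mk _ (X i)

lemma bott_aux_prod {S ι : Type*} [CommRing S] (Y E : S) (hE : E * E = 0) (s : Finset ι) (c : ι → ℤ) :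
    Y * ∏ l ∈ s, (Y + (c l : S) * E) =
      Y ^ (s.card + 1) + ((∑ l ∈ s, c l : ℤ) : S) * E * Y ^ s.card := by
  classical
  induction s using Finset.induction_on with
  | empty => simp
  | insert i s hi ih =>
    rw [Finset.prod_insert hi, Finset.sum_insert hi, Finset.card_insert_of_notMem hi,
      mul_left_comm, ih]
    push_cast
    linear_combination (((c i : S)) * (∑ l ∈ s, (c l : S)) * Y ^ s.card) * hE

lemma bott_aux_pow {S : Type*} [CommRing S] (Y E : S) (hE : E * E = 0) (b w : ℤ) (k : ℕ) :
    ((b : S) * Y + (w : S) * E) ^ (k + 1) =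
      (b : S) ^ (k + 1) * Y ^ (k + 1) + ((k + 1 : ℕ) : S) * (b : S) ^ k * (w : S) * E * Y ^ k := by
  induction k with
  | zero => simp
  | succ k ih =>
    rw [pow_succ, ih]
    push_cast
    linear_combination (((k : S) + 1) * (b : S) ^ k * (w : S) ^ 2 * Y ^ k) * hE

lemma bott_aux_poly (k : ℕ) (b w A : ℤ) (q : Polynomial (DualNumber ℤ)) (hb : b ≠ 0)
    (h : (b : Polynomial (DualNumber ℤ)) ^ (k + 1) * Polynomial.X ^ (k + 1) +
        ((k + 1 : ℕ) : Polynomial (DualNumber ℤ)) * (b : Polynomial (DualNumber ℤ)) ^ k *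
          (w : Polynomial (DualNumber ℤ)) * Polynomial.C DualNumber.eps * Polynomial.X ^ k =
      (Polynomial.X ^ (k + 1) + (A : Polynomial (DualNumber ℤ)) *
        Polynomial.C DualNumber.eps * Polynomial.X ^ k) * q) :
    ((k : ℤ) + 1) * w = b * A := by
  set f : Polynomial (DualNumber ℤ) := Polynomial.X ^ (k + 1) + (A : Polynomial (DualNumber ℤ)) *
        Polynomial.C DualNumber.eps * Polynomial.X ^ k with hf
  have e1 : f = Polynomial.X ^ (k + 1) +
      Polynomial.C ((A : DualNumber ℤ) * DualNumber.eps) * Polynomial.X ^ k := by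
    rw [hf]; simp
  have e2 : (b : Polynomial (DualNumber ℤ)) ^ (k + 1) * Polynomial.X ^ (k + 1) +
        ((k + 1 : ℕ) : Polynomial (DualNumber ℤ)) * (b : Polynomial (DualNumber ℤ)) ^ k *
          (w : Polynomial (DualNumber ℤ)) * Polynomial.C DualNumber.eps * Polynomial.X ^ k =
      Polynomial.C ((b : DualNumber ℤ) ^ (k + 1)) * Polynomial.X ^ (k + 1) +
      Polynomial.C (((k + 1 : ℕ) : DualNumber ℤ) * (b : DualNumber ℤ) ^ k * (w : DualNumber ℤ) *
        DualNumber.eps) * Polynomial.X ^ k := by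
    simp
  rw [e2] at h
  have hd : (Polynomial.C ((A : DualNumber ℤ) * DualNumber.eps) *
      Polynomial.X ^ k).degree < ((k + 1 : ℕ) : WithBot ℕ) :=
    lt_of_le_of_lt (Polynomial.degree_C_mul_X_pow_le _ _) (by exact_mod_cast Nat.lt_succ_self k)
  have hm : f.Monic := by
    rw [e1]; exact Polynomial.monic_X_pow_add hd
  have hdeg : f.natDegree = k + 1 := by
    rw [e1]
    exact Polynomial.natDegree_eq_of_degree_eq_some (by
      rw [Polynomial.degree_add_eq_left_of_degree_lt, Polynomial.degree_X_pow]
      rwa [Polynomial.degree_X_pow])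
  have hq : q.natDegree = 0 := by
    by_cases q0 : q = 0
    · simp [q0]
    have h1 := hm.natDegree_mul' q0
    rw [← h, hdeg] at h1
    have h2 : (Polynomial.C ((b : DualNumber ℤ) ^ (k + 1)) * Polynomial.X ^ (k + 1) +
      Polynomial.C (((k + 1 : ℕ) : DualNumber ℤ) * (b : DualNumber ℤ) ^ k * (w : DualNumber ℤ) *
        DualNumber.eps) * Polynomial.X ^ k).natDegree ≤ k + 1 :=
      Polynomial.natDegree_add_le_of_degree_le (Polynomial.natDegree_C_mul_X_pow_le _ _)
        ((Polynomial.natDegree_C_mul_X_pow_le _ _).trans (Nat.le_succ k))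
    omega
  obtain ⟨c, rfl⟩ := Polynomial.natDegree_eq_zero.mp hq
  rw [e1] at h
  have c1 := congrArg (fun p => Polynomial.coeff p (k + 1)) h
  have c2 := congrArg (fun p => Polynomial.coeff p k) h
  simp only [Polynomial.coeff_add, Polynomial.coeff_C_mul, Polynomial.coeff_mul_C,
    Polynomial.coeff_X_pow] at c1 c2
  simp at c1 c2
  rw [← c1] at c2
  have c3 := congrArg TrivSqZeroExt.snd c2
  have hbi : ((b : DualNumber ℤ)) ^ k = ((b ^ k : ℤ) : DualNumber ℤ) := by push_cast; rfl
  have hbi' : ((b : DualNumber ℤ)) ^ (k+1) = ((b ^ (k+1) : ℤ) : DualNumber ℤ) := by push_cast; rfl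
  rw [hbi, hbi'] at c3
  simp at c3
  have : b ^ k * (((k : ℤ) + 1) * w) = b ^ k * (b * A) := by
    rw [pow_succ] at c3; linarith
  exact mul_left_cancel₀ (pow_ne_zero _ hb) this

lemma bott_aux_key (m : ℕ) (n : Fin (m + 1) → ℕ) (hn : ∀ i, 0 < n i)
    (a : (i : Fin (m + 1)) → Fin (n i) → Fin (m + 1) → ℤ)
    (b : ℤ) (hb : b ≠ 0) (w : Fin (m + 1) → ℤ)
    (h : (b • ybar (m + 1) n a (Fin.last m) +
        ∑ j ∈ Finset.univ.filter (fun j => j < Fin.last m), w j • ybar (m + 1) n a j) ^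
          (n (Fin.last m) + 1) = 0) (k : Fin (m + 1)) (hk : k < Fin.last m) :
    ((n (Fin.last m) : ℤ) + 1) * w k = b * ∑ l, a (Fin.last m) l k := by
  classical
  set E : Polynomial (DualNumber ℤ) := Polynomial.C DualNumber.eps with hE
  have hEE : E * E = 0 := by rw [hE, ← Polynomial.C_mul, DualNumber.eps_mul_eps, Polynomial.C_0]
  set v : Fin (m + 1) → Polynomial (DualNumber ℤ) :=
    fun j => if j = Fin.last m then Polynomial.X else if j = k then E else 0 with hv
  set φ : MvPolynomial (Fin (m + 1)) ℤ →+* Polynomial (DualNumber ℤ) :=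
    eval₂Hom (Int.castRingHom _) v with hφ
  have hvl : v (Fin.last m) = Polynomial.X := by simp [hv]
  have hvj : ∀ j, j < Fin.last m → v j = if j = k then E else 0 := by
    intro j hj; simp [hv, hj.ne]
  have hsum : ∀ (i : Fin (m + 1)) (c : Fin (m + 1) → ℤ),
      ∑ j ∈ Finset.univ.filter (fun j => j < i), (c j : Polynomial (DualNumber ℤ)) * v j =
        (if k < i then (c k : Polynomial (DualNumber ℤ)) else 0) * E := by
    intro i c
    have : ∀ j ∈ Finset.univ.filter (fun j => j < i),
        (c j : Polynomial (DualNumber ℤ)) * v j = if j = k then (c k : Polynomial (DualNumber ℤ)) * E else 0 := by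
      intro j hj
      rw [hvj j (lt_of_lt_of_le (Finset.mem_filter.mp hj).2 (Fin.le_last i))]
      split_ifs with hjk
      · rw [hjk]
      · simp
    rw [Finset.sum_congr rfl this, Finset.sum_ite_eq']
    simp
  have hrel : ∀ i, φ (bottRel (m + 1) n a i) = v i * ∏ l : Fin (n i),
      (v i + (if k < i then (a i l k : Polynomial (DualNumber ℤ)) else 0) * E) := by
    intro i
    simp only [bottRel, map_mul, map_prod, map_add, map_sum]
    congr 1
    · simp [hφ]
    refine Finset.prod_congr rfl fun l _ => ?_
    rw [← hsum i (a i l)]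
    simp [hφ]
  have hlow : ∀ i, i < Fin.last m → φ (bottRel (m + 1) n a i) = 0 := by
    intro i hi
    rw [hrel, ← Finset.mul_prod_erase _ _ (Finset.mem_univ (⟨0, hn i⟩ : Fin (n i))), ← mul_assoc]
    rw [hvj i hi]
    split_ifs <;> simp [mul_add, hEE, mul_left_comm]
  have htop : φ (bottRel (m + 1) n a (Fin.last m)) =
      Polynomial.X ^ (n (Fin.last m) + 1) +
        ((∑ l, a (Fin.last m) l k : ℤ) : Polynomial (DualNumber ℤ)) * E *
          Polynomial.X ^ n (Fin.last m) := by
    rw [hrel, hvl]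
    simp only [if_pos hk]
    rw [bott_aux_prod _ _ hEE]
    simp
  have hle : Ideal.span (Set.range (bottRel (m + 1) n a)) ≤
      (Ideal.span {φ (bottRel (m + 1) n a (Fin.last m))}).comap φ := by
    rw [Ideal.span_le]
    rintro _ ⟨i, rfl⟩
    rcases (Fin.le_last i).lt_or_eq with hi | rfl
    · simp [hlow i hi]
    · exact Ideal.subset_span rfl
  have hmem : (C b * X (Fin.last m) +
        ∑ j ∈ Finset.univ.filter (fun j => j < Fin.last m), C (w j) * X j) ^
          (n (Fin.last m) + 1) ∈ Ideal.span (Set.range (bottRel (m + 1) n a)) := by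
    rw [← Ideal.Quotient.eq_zero_iff_mem, ← h]
    simp only [map_pow, map_add, map_mul, map_sum, ybar, zsmul_eq_mul]
    simp
  obtain ⟨q, hq⟩ := Ideal.mem_span_singleton.mp (Ideal.mem_comap.mp (hle hmem))
  rw [htop] at hq
  refine bott_aux_poly _ b (w k) _ q hb ?_
  rw [← hE, ← hq, ← bott_aux_pow _ _ hEE]
  have := hsum (Fin.last m) w
  rw [if_pos hk] at this
  rw [← this, ← hvl]
  simp only [hφ, map_pow, map_add, map_mul, map_sum, coe_eval₂Hom, eval₂_C, eval₂_X, Int.coe_castRingHom]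

/-- Lemma 3.1: the set of elements `b ȳ_m + w̄` with `b ≠ 0`,
`w̄` in the ℤ-span of `ȳ_1,…,ȳ_{m-1}` and `(b ȳ_m + w̄)^{n_m+1} = 0` lies in a
one-dimensional subspace: any two of its elements are ℤ-linearly dependent. -/
theorem stmt1 (m : ℕ) (n : Fin (m + 1) → ℕ) (hn : ∀ i, 0 < n i)
    (a : (i : Fin (m + 1)) → Fin (n i) → Fin (m + 1) → ℤ)
    (b b' : ℤ) (hb : b ≠ 0) (hb' : b' ≠ 0) (w w' : Fin (m + 1) → ℤ)
    (h : (b • ybar (m + 1) n a (Fin.last m) +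
        ∑ j ∈ Finset.univ.filter (fun j => j < Fin.last m), w j • ybar (m + 1) n a j) ^
          (n (Fin.last m) + 1) = 0)
    (h' : (b' • ybar (m + 1) n a (Fin.last m) +
        ∑ j ∈ Finset.univ.filter (fun j => j < Fin.last m), w' j • ybar (m + 1) n a j) ^
          (n (Fin.last m) + 1) = 0) :
    ∃ s t : ℤ, (s ≠ 0 ∨ t ≠ 0) ∧
      s • (b • ybar (m + 1) n a (Fin.last m) +
          ∑ j ∈ Finset.univ.filter (fun j => j < Fin.last m), w j • ybar (m + 1) n a j) =
      t • (b' • ybar (m + 1) n a (Fin.last m) +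
          ∑ j ∈ Finset.univ.filter (fun j => j < Fin.last m), w' j • ybar (m + 1) n a j) := by
  refine ⟨b', b, Or.inl hb', ?_⟩
  have key : ∀ j ∈ Finset.univ.filter (fun j => j < Fin.last m), b' * w j = b * w' j := by
    intro j hj
    have hj' := (Finset.mem_filter.mp hj).2
    have h1 := bott_aux_key m n hn a b hb w h j hj'
    have h2 := bott_aux_key m n hn a b' hb' w' h' j hj'
    have h0 : ((n (Fin.last m) : ℤ) + 1) ≠ 0 := by positivity
    apply mul_left_cancel₀ h0
    linear_combination b' * h1 - b * h2
  rw [smul_add, smul_add, Finset.smul_sum, Finset.smul_sum, smul_smul, smul_smul, mul_comm b' b]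
  congr 1
  refine Finset.sum_congr rfl fun j hj => ?_
  rw [smul_smul, smul_smul, key j hj]
end

section
/- Let m ≥ 1, let n_1,…,n_m be positive integers, and let A_m be the generalized Bott ring determined by integers a^{(i)}_{l,j}. Suppose b is a nonzero integer and w_1,…,w_{m−1} are integers such that (b·ȳ_m + Σ_{j=1}^{m−1} w_j ȳ_j)^{n_m+1} = 0 in A_m. Then (n_m+1)·Σ_{j=1}^{m−1} w_j ȳ_j = b · Σ_{l=1}^{n_m} ū_{m,l} in A_m, where ū_{m,l} = Σ_{j=1}^{m−1} a^{(m)}_{l,j} ȳ_j; equivalently, (n_m+1)·w_j = b·Σ_{l=1}^{n_m} a^{(m)}_{l,j} for every j = 1,…,m−1. -/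
open MvPolynomial

theorem aux_prod {R : Type*} [CommRing R] (Y E : R) (hE : E * E = 0) {ι : Type*} (s : Finset ι)
    (c : ι → R) :
    Y * ∏ l ∈ s, (Y + c l * E) = Y ^ (s.card + 1) + (∑ l ∈ s, c l) * E * Y ^ s.card := by
  classical
  induction s using Finset.induction_on with
  | empty => simp
  | insert x s hx ih =>
    rw [Finset.prod_insert hx, Finset.sum_insert hx, Finset.card_insert_of_notMem hx]
    linear_combination (Y + c x * E) * ih + c x * (∑ l ∈ s, c l) * Y ^ s.card * hE

theorem aux_pow {R : Type*} [CommRing R] (Y E b w : R) (hE : E * E = 0) (k : ℕ) :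
    (b * Y + w * E) ^ (k + 1) =
      b ^ (k + 1) * Y ^ (k + 1) + (k + 1) * b ^ k * w * E * Y ^ k := by
  induction k with
  | zero => simp
  | succ k ih =>
    rw [pow_succ, ih]
    push_cast
    linear_combination (k + 1) * b ^ k * w * w * Y ^ k * hE

theorem aux_key (N : ℕ) (b w : ℤ) (hb : b ≠ 0) (c : Fin N → ℤ)
    (h : (Polynomial.X * ∏ l, (Polynomial.X +
        ((c l : ℤ) : Polynomial (DualNumber ℤ)) * Polynomial.C DualNumber.eps)) ∣
      ((b : Polynomial (DualNumber ℤ)) * Polynomial.X + (w : Polynomial (DualNumber ℤ)) *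
        Polynomial.C DualNumber.eps) ^ (N + 1)) :
    ((N : ℤ) + 1) * w = b * ∑ l, c l := by
  have hE : (Polynomial.C DualNumber.eps : Polynomial (DualNumber ℤ)) *
      Polynomial.C DualNumber.eps = 0 := by
    rw [← Polynomial.C_mul, DualNumber.eps_mul_eps, Polynomial.C_0]
  rw [aux_prod _ _ hE, aux_pow _ _ _ _ hE] at h
  simp only [Finset.card_univ, Fintype.card_fin] at h
  set d : DualNumber ℤ := ((∑ l, c l : ℤ) : DualNumber ℤ) * DualNumber.eps with hd
  have e1 : (∑ l, ((c l : ℤ) : Polynomial (DualNumber ℤ))) * Polynomial.C DualNumber.eps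
      = Polynomial.C d := by
    simp [hd]
  rw [e1] at h
  have hdeg : (Polynomial.C d * Polynomial.X ^ N).degree < ((N + 1 : ℕ) : WithBot ℕ) :=
    (Polynomial.degree_C_mul_X_pow_le N d).trans_lt (by exact_mod_cast Nat.lt_succ_self N)
  have hm : (Polynomial.X ^ (N + 1) + Polynomial.C d * Polynomial.X ^ N).Monic :=
    Polynomial.monic_X_pow_add hdeg
  have hF : (Polynomial.X ^ (N + 1) + Polynomial.C d * Polynomial.X ^ N).degree
      = ((N + 1 : ℕ) : WithBot ℕ) := by
    rw [Polynomial.degree_add_eq_left_of_degree_lt] <;> simpa using hdeg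
  set q : ℤ := ((N : ℤ) + 1) * b ^ N * w - b ^ (N + 1) * ∑ l, c l with hq
  have h2 := dvd_sub h (Dvd.intro_left ((b : Polynomial (DualNumber ℤ)) ^ (N + 1)) rfl)
  have e2 : (b : Polynomial (DualNumber ℤ)) ^ (N + 1) * Polynomial.X ^ (N + 1) +
      ((N : Polynomial (DualNumber ℤ)) + 1) * (b : Polynomial (DualNumber ℤ)) ^ N *
        (w : Polynomial (DualNumber ℤ)) * Polynomial.C DualNumber.eps * Polynomial.X ^ N -
      (b : Polynomial (DualNumber ℤ)) ^ (N + 1) *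
        (Polynomial.X ^ (N + 1) + Polynomial.C d * Polynomial.X ^ N) =
      Polynomial.C ((q : DualNumber ℤ) * DualNumber.eps) * Polynomial.X ^ N := by
    rw [← e1, hq]
    simp only [Polynomial.C_mul, map_intCast]
    push_cast
    ring
  rw [e2] at h2
  have h3 : Polynomial.C ((q : DualNumber ℤ) * DualNumber.eps) * Polynomial.X ^ N = 0 := by
    by_contra h0
    refine hm.not_dvd_of_degree_lt h0 ?_ h2
    rw [hF]
    exact (Polynomial.degree_C_mul_X_pow_le N _).trans_lt (by exact_mod_cast Nat.lt_succ_self N)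
  have h4 := congrArg (fun p => TrivSqZeroExt.snd (p.coeff N)) h3
  simp only [Polynomial.coeff_C_mul_X_pow, if_true, Polynomial.coeff_zero,
    TrivSqZeroExt.snd_mul, TrivSqZeroExt.snd_zero, DualNumber.snd_eps, DualNumber.fst_eps,
    TrivSqZeroExt.fst_intCast, TrivSqZeroExt.snd_intCast, smul_eq_mul, mul_one,
    MulOpposite.op_zero, zero_smul, add_zero, Int.cast_id] at h4
  have h5 : b ^ N * (((N : ℤ) + 1) * w - b * ∑ l, c l) = 0 := by
    rw [hq] at h4
    linear_combination h4
  rcases mul_eq_zero.1 h5 with h6 | h6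
  · exact absurd h6 (pow_ne_zero _ hb)
  · linarith

/-- key computation in Lemma 3.1: if `(b ȳ_m + ∑_{j<m} w_j ȳ_j)^{n_m+1} = 0`
in the generalized Bott ring with `b ≠ 0`, then `(n_m+1) ∑ w_j ȳ_j = b ∑_l ū_{m,l}`, and
equivalently `(n_m+1) w_j = b ∑_l a^{(m)}_{l,j}` for every `j < m`. -/
theorem stmt2 (m : ℕ) (n : Fin (m + 1) → ℕ) (hn : ∀ i, 0 < n i)
    (a : (i : Fin (m + 1)) → Fin (n i) → Fin (m + 1) → ℤ)
    (b : ℤ) (hb : b ≠ 0) (w : Fin (m + 1) → ℤ)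
    (h : (b • ybar (m + 1) n a (Fin.last m) +
        ∑ j ∈ Finset.univ.filter (fun j => j < Fin.last m), w j • ybar (m + 1) n a j) ^
          (n (Fin.last m) + 1) = 0) :
    (((n (Fin.last m) : ℤ) + 1) •
        ∑ j ∈ Finset.univ.filter (fun j => j < Fin.last m), w j • ybar (m + 1) n a j =
      b • ∑ l : Fin (n (Fin.last m)),
        ∑ j ∈ Finset.univ.filter (fun j => j < Fin.last m),
          a (Fin.last m) l j • ybar (m + 1) n a j) ∧
    ∀ j : Fin (m + 1), j < Fin.last m →
      ((n (Fin.last m) : ℤ) + 1) * w j = b * ∑ l : Fin (n (Fin.last m)), a (Fin.last m) l j := by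
  have key : ∀ j : Fin (m + 1), j < Fin.last m →
      ((n (Fin.last m) : ℤ) + 1) * w j
        = b * ∑ l : Fin (n (Fin.last m)), a (Fin.last m) l j := by
    intro j hj
    apply aux_key _ b (w j) hb
    set E : Polynomial (DualNumber ℤ) := Polynomial.C DualNumber.eps with hEdef
    have hE : E * E = 0 := by
      rw [hEdef, ← Polynomial.C_mul, DualNumber.eps_mul_eps, Polynomial.C_0]
    set φ : MvPolynomial (Fin (m + 1)) ℤ →ₐ[ℤ] Polynomial (DualNumber ℤ) :=
      MvPolynomial.aeval (fun i => if i = Fin.last m then Polynomial.X else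
        if i = j then E else 0) with hφ
    have hlast : φ (X (Fin.last m)) = Polynomial.X := by simp [hφ]
    have hX : ∀ i, i < Fin.last m → φ (X i) = if i = j then E else 0 := by
      intro i hi
      simp [hφ, hi.ne]
    have hC : ∀ z : ℤ, φ (C z) = (z : Polynomial (DualNumber ℤ)) := by
      intro z
      simp [hφ]
    have hsum : ∀ v : Fin (m + 1) → ℤ,
        φ (∑ i ∈ Finset.univ.filter (fun i => i < Fin.last m), C (v i) * X i)
          = (v j : Polynomial (DualNumber ℤ)) * E := by
      intro v
      rw [map_sum, Finset.sum_eq_single_of_mem j (by simpa using hj)]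
      · rw [map_mul, hC, hX j hj, if_pos rfl]
      · intro i hi hij
        rw [map_mul, hX i (by simpa using hi), if_neg hij, mul_zero]
    have hE1 : ∀ i, i < Fin.last m → E ∣ φ (X i) := by
      intro i hi
      rw [hX i hi]
      split_ifs <;> simp
    have hrel : Ideal.span (Set.range (bottRel (m + 1) n a)) ≤
        (Ideal.span {φ (bottRel (m + 1) n a (Fin.last m))}).comap φ := by
      rw [Ideal.span_le]
      rintro _ ⟨i, rfl⟩
      rw [SetLike.mem_coe, Ideal.mem_comap, Ideal.mem_span_singleton]
      rcases eq_or_lt_of_le (Fin.le_last i) with hi | hi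
      · rw [hi]
      · have : E * E ∣ φ (bottRel (m + 1) n a i) := by
          rw [bottRel, map_mul]
          refine mul_dvd_mul (hE1 i hi) ?_
          rw [map_prod]
          refine dvd_trans ?_ (Finset.dvd_prod_of_mem _ (Finset.mem_univ ⟨0, hn i⟩))
          rw [map_add, map_sum]
          refine dvd_add (hE1 i hi) (Finset.dvd_sum ?_)
          intro k hk
          rw [map_mul]
          exact Dvd.dvd.mul_left (hE1 k (lt_trans (by simpa using hk) hi)) _
        rw [hE, zero_dvd_iff] at this
        rw [this]
        exact dvd_zero _
    have hmem : (C b * X (Fin.last m) +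
        ∑ i ∈ Finset.univ.filter (fun i => i < Fin.last m), C (w i) * X i) ^
          (n (Fin.last m) + 1) ∈ Ideal.span (Set.range (bottRel (m + 1) n a)) := by
      rw [← Ideal.Quotient.eq_zero_iff_mem, ← h]
      simp [ybar, zsmul_eq_mul]
    have h1 := hrel hmem
    rw [Ideal.mem_comap, Ideal.mem_span_singleton, map_pow, map_add, hsum, map_mul, hC, hlast,
      bottRel, map_mul, map_prod, hlast] at h1
    simp only [map_add, hlast] at h1
    simpa only [hsum] using h1
  refine ⟨?_, key⟩
  rw [Finset.sum_comm, Finset.smul_sum, Finset.smul_sum]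
  refine Finset.sum_congr rfl ?_
  intro j hj
  rw [← Finset.sum_smul, smul_smul, smul_smul, key j (by simpa using hj)]
end

section
/- Let m ≥ 1, let n_1,…,n_m be positive integers, and let A_m be the generalized Bott ring determined by integers a^{(i)}_{l,j}. Let b_1,…,b_m be integers and suppose b_j ≠ 0 for some index j. Then (Σ_{i=1}^{m} b_i ȳ_i)^{n_j} ≠ 0 in A_m. -/
open MvPolynomial

/-- Lemma 3.2: if `x = ∑ b_i ȳ_i` with `b_j ≠ 0` for some `j`, then
`x^{n_j} ≠ 0` in the generalized Bott ring. -/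
theorem stmt3 (m : ℕ) (n : Fin (m + 1) → ℕ) (hn : ∀ i, 0 < n i)
    (a : (i : Fin (m + 1)) → Fin (n i) → Fin (m + 1) → ℤ)
    (b : Fin (m + 1) → ℤ) (j : Fin (m + 1)) (hj : b j ≠ 0) :
    (∑ i, b i • ybar (m + 1) n a i) ^ (n j) ≠ 0 := by
  intro h
  have h1 : (∑ i, b i • ybar (m + 1) n a i) ^ (n j)
      = Ideal.Quotient.mk (Ideal.span (Set.range (bottRel (m + 1) n a)))
        ((∑ i, b i • X i) ^ (n j)) := by
    simp only [ybar, map_pow, map_sum, map_zsmul]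
  rw [h1, Ideal.Quotient.eq_zero_iff_mem] at h
  -- evaluate `y_j ↦ t` and all other variables at `0`
  let φ : MvPolynomial (Fin (m + 1)) ℤ →ₐ[ℤ] Polynomial ℤ :=
    aeval (fun i => if i = j then Polynomial.X else 0)
  have hφ : ∀ i, φ (X i) = if i = j then Polynomial.X else 0 := fun i => by
    simp only [φ, aeval_X]
  have hle : Ideal.span (Set.range (bottRel (m + 1) n a)) ≤
      (Ideal.span {(Polynomial.X : Polynomial ℤ) ^ (n j + 1)}).comap φ := by
    rw [Ideal.span_le]
    rintro _ ⟨i, rfl⟩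
    rw [SetLike.mem_coe, Ideal.mem_comap, Ideal.mem_span_singleton, bottRel, map_mul, hφ]
    by_cases hi : i = j
    · subst hi
      have hz : ∀ l : Fin (n i), φ (X i + ∑ k ∈ Finset.univ.filter (fun k => k < i),
          C (a i l k) * X k) = Polynomial.X := by
        intro l
        rw [map_add, hφ, if_pos rfl, map_sum, Finset.sum_eq_zero, add_zero]
        intro k hk
        rw [map_mul, hφ, if_neg (Finset.mem_filter.mp hk).2.ne, mul_zero]
      rw [map_prod, Finset.prod_congr rfl (fun l _ => hz l)]
      simp [pow_succ']
    · simp [hi]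
  have h2 := hle h
  rw [Ideal.mem_comap, Ideal.mem_span_singleton, map_pow, map_sum] at h2
  have h3 : ∑ i, φ (b i • X i) = Polynomial.C (b j) * Polynomial.X := by
    simp only [map_zsmul, hφ]
    simp
  rw [h3, Polynomial.X_pow_dvd_iff] at h2
  have h4 := h2 (n j) (Nat.lt_succ_self _)
  rw [mul_pow, ← Polynomial.C_pow, Polynomial.coeff_C_mul, Polynomial.coeff_X_pow_self,
    mul_one] at h4
  exact hj (pow_eq_zero_iff (hn j).ne' |>.mp h4)
end

section
/- Let m ≥ 1, let n_1,…,n_m be positive integers, and let A_m be the generalized Bott ring on variables y_1,…,y_m determined by integers a^{(i)}_{l,j}; let A_{m−1} denote the generalized Bott ring on y_1,…,y_{m−1} with relations f_1,…,f_{m−1}. Suppose there exists a ring isomorphism φ : ℤ[x_1,…,x_m]/(x_1^{n_1+1},…,x_m^{n_m+1}) → A_m such that each φ(x_i) lies in the ℤ-span of ȳ_1,…,ȳ_m. Then there exists a ring isomorphism ℤ[x_1,…,x_{m−1}]/(x_1^{n_1+1},…,x_{m−1}^{n_{m−1}+1}) → A_{m−1}. -/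
open MvPolynomial

/-- The ideal `(x_1^{n_1+1}, …, x_k^{n_k+1})` of `ℤ[x_1,…,x_k]`. -/
noncomputable def truncIdeal (k : ℕ) (n : Fin k → ℕ) : Ideal (MvPolynomial (Fin k) ℤ) :=
  Ideal.span (Set.range fun i => X i ^ (n i + 1))

/-- `ℤ[x_1,…,x_k]/(x_1^{n_1+1},…,x_k^{n_k+1})`, the integral cohomology ring of
`∏ᵢ ℂP^{nᵢ}`. -/
abbrev TruncRing (k : ℕ) (n : Fin k → ℕ) : Type :=
  MvPolynomial (Fin k) ℤ ⧸ truncIdeal k n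


namespace BottAux

lemma coeff_prod_single {σ ι : Type*} [Fintype σ] [DecidableEq σ] (c : ι → σ → ℤ) (k : σ) (s : Finset ι) :
    coeff (Finsupp.single k s.card) (∏ l ∈ s, ∑ i, C (c l i) * X i : MvPolynomial σ ℤ)
      = ∏ l ∈ s, c l k := by
  classical
  induction s using Finset.induction_on with
  | empty => simp
  | insert a s ha ih =>
    rw [Finset.prod_insert ha, Finset.prod_insert ha, Finset.card_insert_of_notMem ha,
      Finset.sum_mul, coeff_sum, ← ih, Finset.sum_eq_single k]
    · rw [mul_assoc, coeff_C_mul, Finsupp.single_add, add_comm, coeff_X_mul]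
    · intro b _ hb
      rw [mul_assoc, coeff_C_mul, coeff_X_mul', if_neg, mul_zero]
      rw [Finsupp.mem_support_iff, Finsupp.single_apply, if_neg (Ne.symm hb)]
      simp
    · simp

lemma mem_trunc {k : ℕ} {n : Fin k → ℕ} {P : MvPolynomial (Fin k) ℤ} (h : P ∈ truncIdeal k n) :
    ∀ s ∈ P.support, ∃ i, n i + 1 ≤ s i := by
  have e : truncIdeal k n = Ideal.span (Set.image (fun s => monomial s (1 : ℤ))
      (Set.range (fun i => Finsupp.single i (n i + 1)))) := by
    unfold truncIdeal
    congr 1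
    rw [← Set.range_comp]
    congr 1
    ext1 i
    simp [X_pow_eq_monomial]
  rw [e, mem_ideal_span_monomial_image] at h
  intro s hs
  obtain ⟨_, ⟨i, rfl⟩, hi⟩ := h s hs
  exact ⟨i, by simpa using hi i⟩

lemma dual_prod {ι : Type*} (s : Finset ι) (c r : ι → ℚ) :
    (∏ l ∈ s, (TrivSqZeroExt.inl (Polynomial.C (c l) * Polynomial.X) + TrivSqZeroExt.inr
      (Polynomial.C (c l * r l)) : DualNumber (Polynomial ℚ))).fst
        = Polynomial.C (∏ l ∈ s, c l) * Polynomial.X ^ s.card ∧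
    (∏ l ∈ s, (TrivSqZeroExt.inl (Polynomial.C (c l) * Polynomial.X) + TrivSqZeroExt.inr
      (Polynomial.C (c l * r l)) : DualNumber (Polynomial ℚ))).snd * Polynomial.X
        = Polynomial.C ((∏ l ∈ s, c l) * ∑ l ∈ s, r l) * Polynomial.X ^ s.card := by
  classical
  induction s using Finset.induction_on with
  | empty => simp
  | insert a s ha ih =>
    obtain ⟨h1, h2⟩ := ih
    rw [Finset.prod_insert ha, Finset.prod_insert ha, Finset.sum_insert ha,
      Finset.card_insert_of_notMem ha]
    constructor
    · rw [TrivSqZeroExt.fst_mul, h1]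
      simp only [TrivSqZeroExt.fst_add, TrivSqZeroExt.fst_inl, TrivSqZeroExt.fst_inr, map_mul]
      ring
    · rw [TrivSqZeroExt.snd_mul, h1]
      simp only [TrivSqZeroExt.fst_add, TrivSqZeroExt.fst_inl, TrivSqZeroExt.fst_inr, map_mul,
        TrivSqZeroExt.snd_add, TrivSqZeroExt.snd_inl, TrivSqZeroExt.snd_inr, smul_eq_mul,
        MulOpposite.smul_eq_mul_unop, MulOpposite.unop_op, map_add] at *
      linear_combination (Polynomial.C (c a) * Polynomial.X) * h2

lemma key (m N : ℕ) (n : Fin m → ℕ) (hn : ∀ i, 0 < n i) (d : Fin m → ℤ)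
    {ι : Type*} [Fintype ι] (hι : Fintype.card ι = N + 1) (c : ι → Fin m → ℤ)
    (hd : ∀ i, n i < N → d i = 0) (hc : ∀ l, ∑ i, c l i * d i = 1)
    (hP : (∏ l, ∑ i, C (c l i) * X i : MvPolynomial (Fin m) ℤ) ∈ truncIdeal m n) :
    ∃ k, n k = N ∧ ∀ l, c l k * d k = 1 := by
  classical
  set P : MvPolynomial (Fin m) ℤ := ∏ l, ∑ i, C (c l i) * X i with hPdef
  have hhom : P.IsHomogeneous (N + 1) := by
    rw [← hι, ← Finset.card_univ, Finset.card_eq_sum_ones]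
    refine IsHomogeneous.prod _ _ _ fun l _ => ?_
    refine IsHomogeneous.sum _ _ _ fun i _ => ?_
    simpa using (isHomogeneous_C _ (c l i)).mul (isHomogeneous_X ℤ i)
  have hev : eval d P = 1 := by
    rw [hPdef, map_prod]
    refine Finset.prod_eq_one fun l _ => ?_
    simpa using hc l
  obtain ⟨s, hs, hs0⟩ : ∃ s ∈ P.support, coeff s P * ∏ i, d i ^ s i ≠ 0 := by
    rw [eval_eq'] at hev
    exact Finset.exists_ne_zero_of_sum_ne_zero (by rw [hev]; exact one_ne_zero)
  obtain ⟨k, hk⟩ := mem_trunc hP s hs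
  have hs0' := right_ne_zero_of_mul hs0
  rw [Finset.prod_ne_zero_iff] at hs0'
  have hdk : d k ≠ 0 := fun h => hs0' k (Finset.mem_univ _) (by rw [h, zero_pow (by omega)])
  have hdeg : ∑ i, s i = N + 1 := by
    have := hhom (mem_support_iff.mp hs)
    rw [Finsupp.weight_apply, Finsupp.sum_fintype _ _ (by simp)] at this
    simpa using this
  have hnk : N ≤ n k := by
    by_contra h
    exact hdk (hd k (by omega))
  have hsum := Finset.add_sum_erase Finset.univ (fun i => s i) (Finset.mem_univ k)
  have hsk : s k = N + 1 := by omega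
  have hz : ∑ i ∈ Finset.univ.erase k, s i = 0 := by omega
  rw [Finset.sum_eq_zero_iff] at hz
  have hss : s = Finsupp.single k (N + 1) := by
    ext i
    rw [Finsupp.single_apply]
    split_ifs with h
    · rw [← h, hsk]
    · exact hz i (Finset.mem_erase.mpr ⟨Ne.symm h, Finset.mem_univ _⟩)
  have hnkN : n k = N := by omega
  have hprod : ∏ l, c l k ≠ 0 := by
    rw [← coeff_prod_single c k Finset.univ, Finset.card_univ, hι, ← hss]
    exact mem_support_iff.mp hs
  have hcne : ∀ l, c l k ≠ 0 := fun l => (Finset.prod_ne_zero_iff.mp hprod) l (Finset.mem_univ _)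
  refine ⟨k, hnkN, ?_⟩
  let f : MvPolynomial (Fin m) ℤ →+* DualNumber (Polynomial ℚ) :=
    eval₂Hom (Int.castRingHom _) (fun i => if i = k then TrivSqZeroExt.inl Polynomial.X
      else TrivSqZeroExt.inr (Polynomial.C (d i : ℚ)))
  have hfP : f P ∈ Ideal.span {(TrivSqZeroExt.inl (Polynomial.X ^ (N + 1)) :
      DualNumber (Polynomial ℚ))} := by
    have : truncIdeal m n ≤ (Ideal.span {(TrivSqZeroExt.inl (Polynomial.X ^ (N + 1)) :
      DualNumber (Polynomial ℚ))}).comap f := by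
      unfold truncIdeal
      rw [Ideal.span_le]
      rintro _ ⟨i, rfl⟩
      simp only [Ideal.coe_comap, Set.mem_preimage, SetLike.mem_coe, map_pow]
      by_cases h : i = k
      · subst h
        simp only [f, coe_eval₂Hom, eval₂_X, if_true, hnkN, ← TrivSqZeroExt.inl_pow]
        exact Ideal.subset_span rfl
      · simp only [f, coe_eval₂Hom, eval₂_X, if_neg h]
        obtain ⟨r, hr⟩ : ∃ r, n i + 1 = 2 + r := ⟨n i - 1, by have := hn i; omega⟩
        rw [hr, pow_add (TrivSqZeroExt.inr _), pow_two, TrivSqZeroExt.inr_mul_inr, zero_mul]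
        exact Ideal.zero_mem _
    exact this hP
  rw [Ideal.mem_span_singleton'] at hfP
  obtain ⟨q, hq⟩ := hfP
  have hfz : f P = ∏ l, (TrivSqZeroExt.inl (Polynomial.C (c l k : ℚ) * Polynomial.X) +
      TrivSqZeroExt.inr (Polynomial.C ((c l k : ℚ) * ((c l k : ℚ)⁻¹ - d k)))) := by
    rw [hPdef, map_prod]
    refine Finset.prod_congr rfl fun l _ => ?_
    have hcl : ((c l k : ℤ) : ℚ) ≠ 0 := by exact_mod_cast hcne l
    rw [map_sum, ← Finset.add_sum_erase _ _ (Finset.mem_univ k)]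
    have h1 := hc l
    rw [← Finset.add_sum_erase _ _ (Finset.mem_univ k)] at h1
    have h2 : (c l k : ℚ) * ((c l k : ℚ)⁻¹ - d k)
        = ∑ i ∈ Finset.univ.erase k, (c l i : ℚ) * d i := by
      rw [mul_sub, mul_inv_cancel₀ hcl]
      have : (c l k : ℚ) * d k + ∑ i ∈ Finset.univ.erase k, (c l i : ℚ) * d i = 1 := by
        exact_mod_cast h1
      linarith
    rw [h2]
    congr 1
    · simp only [f, map_mul, coe_eval₂Hom, eval₂_X, eval₂_C, if_true]
      ext <;> simp
    · rw [map_sum Polynomial.C, ← TrivSqZeroExt.inrHom_apply (R := Polynomial ℚ), map_sum]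
      refine Finset.sum_congr rfl fun i hi => ?_
      simp only [f, map_mul, coe_eval₂Hom, eval₂_X, eval₂_C, if_neg (Finset.ne_of_mem_erase hi)]
      rw [TrivSqZeroExt.inrHom_apply]
      have e : (Int.castRingHom (DualNumber (Polynomial ℚ))) (c l i)
          = TrivSqZeroExt.inl (Polynomial.C (c l i : ℚ)) := by
        ext <;> simp
      rw [e, TrivSqZeroExt.inl_mul_inr, smul_eq_mul]
  have h3 := (dual_prod Finset.univ (fun l => (c l k : ℚ))
    (fun l => (c l k : ℚ)⁻¹ - d k)).2
  rw [← hfz, ← hq, Finset.card_univ, hι] at h3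
  have h4 := congrArg (fun p => Polynomial.coeff p (N + 1)) h3
  simp only [TrivSqZeroExt.snd_mul, TrivSqZeroExt.snd_inl, TrivSqZeroExt.fst_inl, smul_zero,
    zero_add, MulOpposite.smul_eq_mul_unop, MulOpposite.unop_op, Polynomial.coeff_mul_X,
    Polynomial.coeff_mul_X_pow'] at h4
  rw [if_neg (by omega), if_pos le_rfl, Nat.sub_self, Polynomial.coeff_C_zero] at h4
  have h5 : ∑ l, ((c l k : ℚ)⁻¹ - d k) = 0 := by
    rcases mul_eq_zero.mp h4.symm with h | h
    · exact absurd h (by exact_mod_cast hprod)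
    · exact h
  have h6 : ∑ l, (d k : ℚ) * ((c l k : ℚ)⁻¹ - d k) = 0 := by
    rw [← Finset.mul_sum, h5, mul_zero]
  have h7 : ∀ l ∈ Finset.univ, (d k : ℚ) * ((c l k : ℚ)⁻¹ - d k) ≤ 0 := by
    intro l _
    have hcl : ((c l k : ℤ) : ℚ) ≠ 0 := by exact_mod_cast hcne l
    have hc1 : (1 : ℚ) ≤ |(c l k : ℚ)| := by exact_mod_cast Int.one_le_abs (hcne l)
    have hd1 : (1 : ℚ) ≤ |(d k : ℚ)| := by exact_mod_cast Int.one_le_abs hdk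
    have h8 : |(c l k : ℚ)⁻¹| ≤ 1 := by rw [abs_inv]; exact inv_le_one_of_one_le₀ hc1
    have h9 : (d k : ℚ) * (c l k : ℚ)⁻¹ ≤ |(d k : ℚ)| := by
      refine (le_abs_self _).trans ?_
      rw [abs_mul]
      nlinarith [abs_nonneg (d k : ℚ)]
    have h10 : |(d k : ℚ)| * |(d k : ℚ)| = d k * d k := abs_mul_abs_self _
    nlinarith
  rw [Finset.sum_eq_zero_iff_of_nonpos h7] at h6
  intro l
  have hcl : ((c l k : ℤ) : ℚ) ≠ 0 := by exact_mod_cast hcne l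
  have hdq : (d k : ℚ) ≠ 0 := by exact_mod_cast hdk
  have h11 := (mul_eq_zero.mp (h6 l (Finset.mem_univ _))).resolve_left hdq
  have h12 : (d k : ℚ) = (c l k : ℚ)⁻¹ := by linarith
  have : (c l k : ℚ) * d k = 1 := by rw [h12, mul_inv_cancel₀ hcl]
  exact_mod_cast this

end BottAux

namespace BottAux

lemma trunc_eq (k : ℕ) (n : Fin k → ℕ) :
    truncIdeal k n = Ideal.span (Set.range (bottRel k n (fun _ _ _ => 0))) := by
  unfold truncIdeal
  congr 2
  ext1 i
  simp [bottRel, pow_succ']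

section
variable {m : ℕ} (n : Fin (m + 1) → ℕ) (a : (i : Fin (m + 1)) → Fin (n i) → Fin (m + 1) → ℤ)

abbrev SubBott : Type :=
  BottRing m (fun i => n i.castSucc) (fun i l j => a i.castSucc l j.castSucc)

lemma rename_bottRel (i : Fin m) :
    rename Fin.castSucc (bottRel m (fun i => n i.castSucc)
      (fun i l j => a i.castSucc l j.castSucc) i) = bottRel (m + 1) n a i.castSucc := by
  simp only [bottRel, map_mul, map_prod, map_add, map_sum, rename_X, Finset.sum_filter,
    Fin.sum_univ_castSucc]
  congr 1
  refine Finset.prod_congr rfl fun l _ => ?_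
  rw [if_neg (by simp [Fin.lt_def]), add_zero]
  congr 1
  refine Finset.sum_congr rfl fun j _ => ?_
  by_cases h : j < i
  · rw [if_pos h, if_pos (by simpa using h)]; simp
  · rw [if_neg h, if_neg (by simpa using h)]; simp

lemma bottRel_last :
    bottRel (m + 1) n a (Fin.last m) = X (Fin.last m) * ∏ l : Fin (n (Fin.last m)),
      (X (Fin.last m) + ∑ j : Fin m, C (a (Fin.last m) l j.castSucc) * X j.castSucc) := by
  simp only [bottRel, Finset.sum_filter, Fin.sum_univ_castSucc]
  congr 1
  refine Finset.prod_congr rfl fun l _ => ?_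
  rw [if_neg (by simp), add_zero]
  congr 1
  refine Finset.sum_congr rfl fun j _ => ?_
  rw [if_pos (Fin.castSucc_lt_last j)]

noncomputable def incl : SubBott n a →+* BottRing (m + 1) n a :=
  Ideal.Quotient.lift _ ((Ideal.Quotient.mk _).comp (rename Fin.castSucc).toRingHom) (by
    intro x hx
    rw [← RingHom.mem_ker]
    revert x
    change Ideal.span _ ≤ _
    rw [Ideal.span_le]
    rintro _ ⟨i, rfl⟩
    simp only [SetLike.mem_coe, RingHom.mem_ker]
    change Ideal.Quotient.mk _ (rename Fin.castSucc _) = 0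
    rw [rename_bottRel, Ideal.Quotient.eq_zero_iff_mem]
    exact Ideal.subset_span ⟨_, rfl⟩)

lemma incl_y (j : Fin m) : incl n a (ybar _ _ _ j) = ybar _ _ _ j.castSucc := by
  unfold incl ybar
  rw [Ideal.Quotient.lift_mk]
  change Ideal.Quotient.mk _ (rename Fin.castSucc _) = _
  rw [rename_X]

noncomputable def bb (l : Fin (n (Fin.last m))) : SubBott n a :=
  ∑ j : Fin m, (a (Fin.last m) l j.castSucc : SubBott n a) * ybar _ _ _ j

noncomputable def FF : Polynomial (SubBott n a) :=
  Polynomial.X * ∏ l : Fin (n (Fin.last m)), (Polynomial.X + Polynomial.C (bb n a l))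

lemma FF_monic : (FF n a).Monic :=
  Polynomial.monic_X.mul (Polynomial.monic_prod_of_monic _ _ fun _ _ => Polynomial.monic_X_add_C _)

lemma FF_natDegree [Nontrivial (SubBott n a)] : (FF n a).natDegree = n (Fin.last m) + 1 := by
  unfold FF
  rw [Polynomial.Monic.natDegree_mul Polynomial.monic_X
    (Polynomial.monic_prod_of_monic _ _ fun _ _ => Polynomial.monic_X_add_C _),
    Polynomial.natDegree_prod_of_monic _ _ fun _ _ => Polynomial.monic_X_add_C _]
  simp [add_comm]

noncomputable def gg : BottRing (m + 1) n a →+* AdjoinRoot (FF n a) :=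
  Ideal.Quotient.lift _ (eval₂Hom (Int.castRingHom _)
    (Fin.lastCases (AdjoinRoot.root (FF n a)) (fun j => AdjoinRoot.of (FF n a) (ybar _ _ _ j)))) (by
    intro x hx
    rw [← RingHom.mem_ker]
    revert x
    change Ideal.span _ ≤ _
    rw [Ideal.span_le]
    rintro _ ⟨i, rfl⟩
    simp only [SetLike.mem_coe, RingHom.mem_ker]
    induction i using Fin.lastCases with
    | last =>
      rw [bottRel_last]
      have := AdjoinRoot.eval₂_root (FF n a)
      conv at this => lhs; arg 3; unfold FF
      simp only [Polynomial.eval₂_mul, Polynomial.eval₂_X, Polynomial.eval₂_finsetProd,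
        Polynomial.eval₂_add, Polynomial.eval₂_C, Polynomial.eval₂_add] at this
      simp only [bb, map_sum, map_mul, map_intCast] at this
      simp only [map_mul, map_prod, map_add, map_sum, coe_eval₂Hom, eval₂_X, eval₂_C,
        Fin.lastCases_last, Fin.lastCases_castSucc]
      simpa only [eq_intCast] using this
    | cast i =>
      rw [← rename_bottRel]
      have : ∀ p, eval₂Hom (Int.castRingHom _)
        (Fin.lastCases (AdjoinRoot.root (FF n a))
          (fun j => AdjoinRoot.of (FF n a) (ybar _ _ _ j))) (rename Fin.castSucc p)
          = AdjoinRoot.of (FF n a) (Ideal.Quotient.mk _ p) := by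
        intro p
        rw [← RingHom.comp_apply]
        simp only [coe_eval₂Hom, eval₂_rename]
        rw [← coe_eval₂Hom]
        congr 1
        apply MvPolynomial.ringHom_ext
        · intro r; simp
        · intro j; simp [ybar]
      rw [this, Ideal.Quotient.eq_zero_iff_mem.mpr (Ideal.subset_span (Set.mem_range_self i)),
        map_zero])

lemma gg_last : gg n a (ybar _ _ _ (Fin.last m)) = AdjoinRoot.root _ := by
  simp [gg, ybar]

lemma gg_cast (j : Fin m) : gg n a (ybar _ _ _ j.castSucc) = AdjoinRoot.of _ (ybar _ _ _ j) := by
  simp [gg, ybar]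

noncomputable def hh : AdjoinRoot (FF n a) →+* BottRing (m + 1) n a :=
  AdjoinRoot.lift (incl n a) (ybar _ _ _ (Fin.last m)) (by
    unfold FF
    simp only [Polynomial.eval₂_mul, Polynomial.eval₂_X, Polynomial.eval₂_finsetProd,
        Polynomial.eval₂_add, Polynomial.eval₂_C, Polynomial.eval₂_add]
    simp only [bb, map_sum, map_mul, map_intCast, incl_y]
    have : Ideal.Quotient.mk (Ideal.span (Set.range (bottRel (m + 1) n a)))
      (bottRel (m + 1) n a (Fin.last m)) = 0 :=
        Ideal.Quotient.eq_zero_iff_mem.mpr (Ideal.subset_span ⟨_, rfl⟩)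
    rw [bottRel_last] at this
    simp only [map_mul, map_prod, map_add, map_sum] at this
    rw [← this]
    simp [ybar])

lemma bott_hom_ext {k : ℕ} {n : Fin k → ℕ} {a : (i : Fin k) → Fin (n i) → Fin k → ℤ}
    {R : Type*} [CommRing R] {f g : BottRing k n a →+* R}
    (h : ∀ i, f (ybar _ _ _ i) = g (ybar _ _ _ i)) : f = g := by
  apply Ideal.Quotient.ringHom_ext
  apply MvPolynomial.ringHom_ext
  · intro r; simp
  · exact h

noncomputable def bottEquiv : BottRing (m + 1) n a ≃+* AdjoinRoot (FF n a) :=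
  RingEquiv.ofRingHom (gg n a) (hh n a)
    (by
      apply AdjoinRoot.ringHom_ext
      · apply bott_hom_ext
        intro i
        simp [hh, incl_y, gg_cast]
      · simp [hh, gg_last])
    (by
      apply bott_hom_ext
      intro i
      induction i using Fin.lastCases with
      | last => simp [hh, gg_last]
      | cast i => simp [hh, gg_cast, incl_y])

lemma bott_add : Nonempty (BottRing (m + 1) n a ≃+ (Fin (n (Fin.last m) + 1) → SubBott n a)) := by
  rcases subsingleton_or_nontrivial (SubBott n a) with h | h
  · have : Subsingleton (AdjoinRoot (FF n a)) := by
      have : (1 : AdjoinRoot (FF n a)) = 0 := by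
        rw [← map_one (AdjoinRoot.of (FF n a)), Subsingleton.elim (1 : SubBott n a) 0, map_zero]
      exact subsingleton_of_zero_eq_one this.symm
    have := (bottEquiv n a).toEquiv.subsingleton
    exact ⟨{ toFun := fun _ => 0, invFun := fun _ => 0, left_inv := fun _ => Subsingleton.elim _ _,
             right_inv := fun _ => Subsingleton.elim _ _, map_add' := fun _ _ => by simp }⟩
  · have e := (AdjoinRoot.powerBasis' (FF_monic n a)).basis.equivFun
    have hd : (AdjoinRoot.powerBasis' (FF_monic n a)).dim = n (Fin.last m) + 1 := by
      rw [AdjoinRoot.powerBasis'_dim, FF_natDegree]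
    rw [hd] at e
    exact ⟨(bottEquiv n a).toAddEquiv.trans e.toAddEquiv⟩

end

lemma bott_finite (m : ℕ) (n : Fin m → ℕ) (a : (i : Fin m) → Fin (n i) → Fin m → ℤ) :
    Module.Finite ℤ (BottRing m n a) := by
  induction m with
  | zero =>
    have : Module.Finite ℤ (MvPolynomial (Fin 0) ℤ) :=
      Module.Finite.equiv (MvPolynomial.isEmptyAlgEquiv ℤ (Fin 0)).symm.toLinearEquiv
    exact Module.Finite.of_surjective
      ((Ideal.Quotient.mk (Ideal.span (Set.range (bottRel 0 n a)))).toAddMonoidHom.toIntLinearMap)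
      Ideal.Quotient.mk_surjective
  | succ m ih =>
    obtain ⟨e⟩ := bott_add n a
    have := ih (fun i => n i.castSucc) (fun i l j => a i.castSucc l j.castSucc)
    exact Module.Finite.equiv e.symm.toIntLinearEquiv

noncomputable def truncEquiv (k : ℕ) (n : Fin k → ℕ) :
    TruncRing k n ≃+* BottRing k n (fun _ _ _ => 0) := Ideal.quotEquivOfEq (trunc_eq k n)

lemma inj_of_surj {m : ℕ} (n : Fin (m + 1) → ℕ)
    (a : (i : Fin (m + 1)) → Fin (n i) → Fin (m + 1) → ℤ)
    (φ : TruncRing (m + 1) n ≃+* BottRing (m + 1) n a)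
    (f : TruncRing m (fun i => n i.castSucc) →+* SubBott n a) (hf : Function.Surjective f) :
    Function.Injective f := by
  obtain ⟨e1⟩ := bott_add n a
  obtain ⟨e2⟩ := bott_add n (fun _ _ _ => 0)
  let t : TruncRing m (fun i => n i.castSucc) ≃+* SubBott n (fun _ _ _ => 0) := truncEquiv _ _
  have hfin := bott_finite (m + 1) n (fun _ _ _ => 0)
  let F : (Fin (n (Fin.last m) + 1) → SubBott n (fun _ _ _ => 0)) →+
      (Fin (n (Fin.last m) + 1) → SubBott n a) :=
    (f.comp t.symm.toRingHom).toAddMonoidHom.compLeft _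
  let G : BottRing (m + 1) n (fun _ _ _ => 0) →+ BottRing (m + 1) n (fun _ _ _ => 0) :=
    ((truncEquiv (m + 1) n).toAddEquiv.toAddMonoidHom.comp φ.symm.toAddEquiv.toAddMonoidHom).comp
      (e1.symm.toAddMonoidHom.comp (F.comp e2.toAddMonoidHom))
  have hF : Function.Surjective F := by
    intro v
    choose w hw using fun i => hf (v i)
    refine ⟨fun i => t (w i), ?_⟩
    ext i
    simp [F, hw]
  have hG : Function.Surjective G := by
    have := (truncEquiv (m + 1) n).surjective.comp (φ.symm.surjective.comp
      (e1.symm.surjective.comp (hF.comp e2.surjective)))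
    exact this
  have hGi : Function.Injective G.toIntLinearMap :=
    OrzechProperty.injective_of_surjective_endomorphism _ hG
  have hFi : Function.Injective F := by
    intro v w h
    obtain ⟨v, rfl⟩ := e2.surjective v
    obtain ⟨w, rfl⟩ := e2.surjective w
    congr 1
    apply hGi
    change truncEquiv (m + 1) n (φ.symm (e1.symm (F (e2 v)))) =
      truncEquiv (m + 1) n (φ.symm (e1.symm (F (e2 w))))
    rw [h]
  intro x y h
  have : (fun _ => t x : Fin (n (Fin.last m) + 1) → SubBott n (fun _ _ _ => 0)) = fun _ => t y := by
    apply hFi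
    ext i
    simp [F, h]
  exact t.injective (congrFun this 0)

end BottAux

namespace BottAux

section
variable {m : ℕ} (n : Fin (m + 1) → ℕ) (a : (i : Fin (m + 1)) → Fin (n i) → Fin (m + 1) → ℤ)

noncomputable def proj : BottRing (m + 1) n a →+* SubBott n a :=
  (AdjoinRoot.lift (RingHom.id _) 0 (by simp [FF])).comp (gg n a)

lemma proj_last : proj n a (ybar _ _ _ (Fin.last m)) = 0 := by
  simp [proj, gg_last]

lemma proj_cast (j : Fin m) : proj n a (ybar _ _ _ j.castSucc) = ybar _ _ _ j := by
  simp [proj, gg_cast]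

lemma proj_surj : Function.Surjective (proj n a) := by
  have : (proj n a).comp (incl n a) = RingHom.id _ := by
    apply bott_hom_ext
    intro i
    simp [incl_y, proj_cast]
  intro x
  exact ⟨incl n a x, by simpa using congrArg (fun f => f x) this⟩

end

section
variable {m : ℕ} (n : Fin m → ℕ) (a : (i : Fin m) → Fin (n i) → Fin m → ℤ)

noncomputable def thetaPre (m : ℕ) : MvPolynomial (Fin m) ℤ →+* TrivSqZeroExt ℤ (Fin m → ℤ) :=
  eval₂Hom (Int.castRingHom _) (fun j => TrivSqZeroExt.inr (Pi.single j 1))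

lemma fst_thetaPre (m : ℕ) (p : MvPolynomial (Fin m) ℤ) :
    (thetaPre m p).fst = constantCoeff p := by
  have : ((TrivSqZeroExt.fstHom ℤ ℤ (Fin m → ℤ)).toRingHom).comp (thetaPre m) = constantCoeff := by
    apply MvPolynomial.ringHom_ext
    · intro r; simp
    · intro i; simp [thetaPre]
  exact congrArg (fun f => f p) this

lemma thetaPre_bottRel (hn : ∀ i, 0 < n i) (i : Fin m) : thetaPre m (bottRel m n a i) = 0 := by
  have h0 : (thetaPre m (∏ l : Fin (n i),
      (X i + ∑ j ∈ Finset.univ.filter (fun j => j < i), C (a i l j) * X j))).fst = 0 := by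
    rw [fst_thetaPre, map_prod]
    exact Finset.prod_eq_zero (Finset.mem_univ ⟨0, hn i⟩) (by simp)
  unfold bottRel
  rw [map_mul]
  have h1 : thetaPre m (X i) = TrivSqZeroExt.inr (Pi.single i 1) := by simp [thetaPre]
  rw [h1]
  apply TrivSqZeroExt.ext
  · simp
  · rw [TrivSqZeroExt.snd_mul, h0]
    simp

noncomputable def theta (hn : ∀ i, 0 < n i) : BottRing m n a →+* TrivSqZeroExt ℤ (Fin m → ℤ) :=
  Ideal.Quotient.lift _ (thetaPre m) (by
    intro x hx
    rw [← RingHom.mem_ker]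
    revert x
    change Ideal.span _ ≤ _
    rw [Ideal.span_le]
    rintro _ ⟨i, rfl⟩
    simp only [SetLike.mem_coe, RingHom.mem_ker]
    exact thetaPre_bottRel n a hn i)

lemma theta_y (hn : ∀ i, 0 < n i) (i : Fin m) : theta n a hn (ybar _ _ _ i) = TrivSqZeroExt.inr (Pi.single i 1) := by
  simp [theta, ybar, thetaPre]

lemma theta_lin (hn : ∀ i, 0 < n i) (w : Fin m → ℤ) :
    theta n a hn (∑ j, w j • ybar _ _ _ j) = TrivSqZeroExt.inr w := by
  rw [map_sum]
  simp only [map_zsmul, theta_y]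
  have : ∀ v : Fin m → ℤ, TrivSqZeroExt.inr v = TrivSqZeroExt.inrHom ℤ (Fin m → ℤ) v := fun _ => rfl
  simp only [this, ← map_zsmul, ← map_sum]
  congr 1
  ext j
  simp [Finset.sum_apply, Pi.single_apply]

lemma snd_mem (P : Fin m → Fin m → ℤ) (f : MvPolynomial (Fin m) ℤ →+* TrivSqZeroExt ℤ (Fin m → ℤ))
    (hf : ∀ i, f (X i) = TrivSqZeroExt.inr (P i)) (q : MvPolynomial (Fin m) ℤ) :
    (f q).snd ∈ Submodule.span ℤ (Set.range P) := by
  induction q using MvPolynomial.induction_on with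
  | C r => simp
  | add p q hp hq => rw [map_add, TrivSqZeroExt.snd_add]; exact Submodule.add_mem _ hp hq
  | mul_X p i hp =>
    rw [map_mul, hf, TrivSqZeroExt.snd_mul]
    simp only [TrivSqZeroExt.snd_inr, TrivSqZeroExt.fst_inr, MulOpposite.op_zero, zero_smul,
      add_zero]
    exact Submodule.smul_mem _ _ (Submodule.subset_span ⟨i, rfl⟩)

lemma exists_lin (hn : ∀ i, 0 < n i) (φ : TruncRing m n ≃+* BottRing m n a) (P : Fin m → Fin m → ℤ)
    (hP : ∀ i, ∑ j, P i j • ybar m n a j = φ (Ideal.Quotient.mk (truncIdeal m n) (X i)))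
    (w : Fin m → ℤ) : ∃ c : Fin m → ℤ,
      φ (Ideal.Quotient.mk (truncIdeal m n) (∑ i, C (c i) * X i)) = ∑ j, w j • ybar m n a j ∧
      ∀ j, ∑ i, c i * P i j = w j := by
  obtain ⟨q, hq⟩ := Ideal.Quotient.mk_surjective (φ.symm (∑ j, w j • ybar m n a j))
  have h1 := snd_mem P (((theta n a hn).comp φ.toRingHom).comp (Ideal.Quotient.mk (truncIdeal m n)))
    (by
      intro i
      change theta n a hn (φ _) = _
      rw [← hP, theta_lin]) q
  have h2 : (((theta n a hn).comp φ.toRingHom).comp (Ideal.Quotient.mk (truncIdeal m n))) q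
      = TrivSqZeroExt.inr w := by
    change theta n a hn (φ _) = _
    rw [hq, RingEquiv.apply_symm_apply, theta_lin]
  rw [h2, TrivSqZeroExt.snd_inr, Submodule.mem_span_range_iff_exists_fun] at h1
  obtain ⟨c, hc⟩ := h1
  have hc' : ∀ j, ∑ i, c i * P i j = w j := by
    intro j
    rw [← hc]
    simp [Finset.sum_apply]
  refine ⟨c, ?_, hc'⟩
  have : ∀ i, φ (Ideal.Quotient.mk (truncIdeal m n) (C (c i) * X i))
      = ∑ j, (c i * P i j) • ybar m n a j := by
    intro i
    have e : (C (c i) : MvPolynomial (Fin m) ℤ) = ((c i : ℤ) : MvPolynomial (Fin m) ℤ) := by simp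
    rw [map_mul, map_mul, ← hP, Finset.mul_sum, e, map_intCast, map_intCast]
    refine Finset.sum_congr rfl fun j _ => ?_
    rw [← zsmul_eq_mul, smul_smul]
  rw [map_sum, map_sum]
  simp only [this]
  rw [Finset.sum_comm]
  refine Finset.sum_congr rfl fun j _ => ?_
  rw [← Finset.sum_smul, hc']

end

lemma d_zero {m : ℕ} (n : Fin (m + 1) → ℕ) (a : (i : Fin (m + 1)) → Fin (n i) → Fin (m + 1) → ℤ)
    (p : Fin (m + 1) → ℤ) (r : ℕ) (hr : r < n (Fin.last m))
    (h : (∑ j, p j • ybar (m + 1) n a j) ^ (r + 1) = 0) : p (Fin.last m) = 0 := by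
  classical
  let τ : MvPolynomial (Fin (m + 1)) ℤ →+* Polynomial ℤ :=
    eval₂Hom (Int.castRingHom _) (Pi.single (Fin.last m) Polynomial.X)
  have hτ : Ideal.span (Set.range (bottRel (m + 1) n a)) ≤
      (Ideal.span {(Polynomial.X ^ (n (Fin.last m) + 1) : Polynomial ℤ)}).comap τ := by
    rw [Ideal.span_le]
    rintro _ ⟨i, rfl⟩
    simp only [Ideal.coe_comap, Set.mem_preimage, SetLike.mem_coe]
    induction i using Fin.lastCases with
    | last =>
      rw [bottRel_last]
      apply Ideal.subset_span
      have hl : ∀ j : Fin m, j.castSucc ≠ Fin.last m := fun j => (Fin.castSucc_lt_last j).ne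
      simp [τ, hl, pow_succ']
    | cast i =>
      have hl : i.castSucc ≠ Fin.last m := (Fin.castSucc_lt_last i).ne
      have : τ (X i.castSucc) = 0 := by simp [τ, hl]
      unfold bottRel
      rw [map_mul, this, zero_mul]
      exact Ideal.zero_mem _
  have h1 : ∑ j, p j • ybar (m + 1) n a j = Ideal.Quotient.mk _ (∑ j, p j • X j) := by
    rw [map_sum]
    simp only [map_zsmul, ybar]
  rw [h1, ← map_pow, Ideal.Quotient.eq_zero_iff_mem] at h
  have h2 := hτ h
  rw [Ideal.mem_comap, Ideal.mem_span_singleton] at h2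
  have h3 : τ (∑ j, p j • X j) = Polynomial.C (p (Fin.last m)) * Polynomial.X := by
    rw [map_sum, Finset.sum_eq_single (Fin.last m)]
    · rw [map_zsmul, zsmul_eq_mul]
      simp [τ]
    · intro b _ hb
      simp [τ, hb]
    · simp
  rw [map_pow, h3, Polynomial.X_pow_dvd_iff] at h2
  have h4 := h2 (r + 1) (by omega)
  rw [mul_pow, ← Polynomial.C_pow, Polynomial.coeff_C_mul, Polynomial.coeff_X_pow, if_pos rfl,
    mul_one] at h4
  exact eq_zero_of_pow_eq_zero h4

lemma exists_k {m : ℕ} (n : Fin (m + 1) → ℕ) (hn : ∀ i, 0 < n i)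
    (a : (i : Fin (m + 1)) → Fin (n i) → Fin (m + 1) → ℤ)
    (φ : TruncRing (m + 1) n ≃+* BottRing (m + 1) n a)
    (hφ : ∀ i : Fin (m + 1), φ (Ideal.Quotient.mk (truncIdeal (m + 1) n) (X i)) ∈
      Submodule.span ℤ (Set.range (ybar (m + 1) n a))) :
    ∃ (k : Fin (m + 1)) (c : Fin (m + 1) → ℤ) (d : ℤ), n k = n (Fin.last m) ∧ c k * d = 1 ∧
      φ (Ideal.Quotient.mk (truncIdeal (m + 1) n) (∑ i, C (c i) * X i))
        = ybar (m + 1) n a (Fin.last m) := by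
  classical
  simp only [Submodule.mem_span_range_iff_exists_fun] at hφ
  choose P hP using hφ
  choose c hc1 hc2 using exists_lin n a hn φ P hP
  let w : Option (Fin (n (Fin.last m))) → Fin (m + 1) → ℤ := fun o =>
    o.elim (Pi.single (Fin.last m) 1)
      (fun l => Fin.lastCases 1 (fun j => a (Fin.last m) l j.castSucc))
  have hw : ∀ o, w o (Fin.last m) = 1 := by
    rintro (_ | l) <;> simp [w]
  have hnone : ∑ j, w none j • ybar (m + 1) n a j = ybar (m + 1) n a (Fin.last m) := by
    simp [w, Fin.sum_univ_castSucc, (Fin.castSucc_lt_last _).ne]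
  obtain ⟨k, hk1, hk2⟩ := key (m + 1) (n (Fin.last m)) n hn (fun i => P i (Fin.last m))
    (ι := Option (Fin (n (Fin.last m)))) (by simp) (fun o => c (w o))
    (by
      intro i hi
      refine d_zero n a (P i) (n i) hi ?_
      rw [hP, ← map_pow, ← map_pow, Ideal.Quotient.eq_zero_iff_mem.mpr, map_zero]
      exact Ideal.subset_span ⟨i, rfl⟩)
    (by
      intro o
      rw [hc2, hw])
    (by
      rw [← Ideal.Quotient.eq_zero_iff_mem]
      apply φ.injective
      rw [map_zero, map_prod, map_prod, Fintype.prod_option]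
      simp only [hc1]
      rw [hnone]
      have : Ideal.Quotient.mk (Ideal.span (Set.range (bottRel (m + 1) n a)))
        (bottRel (m + 1) n a (Fin.last m)) = 0 :=
          Ideal.Quotient.eq_zero_iff_mem.mpr (Ideal.subset_span ⟨_, rfl⟩)
      rw [bottRel_last] at this
      rw [← this, map_mul, map_prod]
      congr 1
      refine Finset.prod_congr rfl fun l _ => ?_
      simp [w, Fin.sum_univ_castSucc, add_comm, ybar])
  exact ⟨k, c (w none), P k (Fin.last m), hk1, hk2 none, by rw [hc1, hnone]⟩

end BottAux

/-- Lemma 4.2: if the generalized Bott ring `A_m` is isomorphic to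
`ℤ[x_1,…,x_m]/(x_i^{n_i+1})` by a graded ring isomorphism (each `φ(x_i)` lies in the
ℤ-span of the `ȳ_j`), then `A_{m-1}` is isomorphic to
`ℤ[x_1,…,x_{m-1}]/(x_i^{n_i+1})`. -/
theorem stmt5 (m : ℕ) (n : Fin (m + 1) → ℕ) (hn : ∀ i, 0 < n i)
    (a : (i : Fin (m + 1)) → Fin (n i) → Fin (m + 1) → ℤ)
    (φ : TruncRing (m + 1) n ≃+* BottRing (m + 1) n a)
    (hφ : ∀ i : Fin (m + 1), φ (Ideal.Quotient.mk (truncIdeal (m + 1) n) (X i)) ∈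
      Submodule.span ℤ (Set.range (ybar (m + 1) n a))) :
    Nonempty (TruncRing m (fun i => n i.castSucc) ≃+*
      BottRing m (fun i => n i.castSucc) (fun i l j => a i.castSucc l j.castSucc)) := by
  classical
  obtain ⟨k, c, d, hk, hcd, hc⟩ := BottAux.exists_k n hn a φ hφ
  let ψ : MvPolynomial (Fin (m + 1)) ℤ →+* BottAux.SubBott n a :=
    ((BottAux.proj n a).comp φ.toRingHom).comp (Ideal.Quotient.mk (truncIdeal (m + 1) n))
  have hψs : Function.Surjective ψ :=
    ((BottAux.proj_surj n a).comp φ.surjective).comp Ideal.Quotient.mk_surjective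
  have hψ0 : ψ (∑ i, C (c i) * X i) = 0 := by
    change BottAux.proj n a (φ _) = 0
    rw [hc, BottAux.proj_last]
  have hψn : ∀ i, ψ (X i) ^ (n i + 1) = 0 := by
    intro i
    rw [← map_pow]
    change BottAux.proj n a (φ _) = 0
    rw [Ideal.Quotient.eq_zero_iff_mem.mpr, map_zero, map_zero]
    exact Ideal.subset_span ⟨i, rfl⟩
  let σ : Equiv.Perm (Fin (m + 1)) := Equiv.swap k (Fin.last m)
  have hσ : ∀ i, n (σ i) = n i := by
    intro i
    simp only [σ, Equiv.swap_apply_def]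
    split_ifs with h1 h2
    · rw [h1, hk]
    · rw [h2, hk]
    · rfl
  let f : TruncRing m (fun i => n i.castSucc) →+* BottAux.SubBott n a :=
    Ideal.Quotient.lift _ (eval₂Hom (Int.castRingHom _) (fun i => ψ (X (σ i.castSucc)))) (by
      intro x hx
      rw [← RingHom.mem_ker]
      revert x
      change truncIdeal _ _ ≤ _
      unfold truncIdeal
      rw [Ideal.span_le]
      rintro _ ⟨i, rfl⟩
      simp only [SetLike.mem_coe, RingHom.mem_ker, map_pow, coe_eval₂Hom, eval₂_X]
      rw [← hσ, hψn])
  have hf : ∀ i, f (Ideal.Quotient.mk _ (X i)) = ψ (X (σ i.castSucc)) := by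
    intro i
    simp [f]
  have hne : ∀ j, j ≠ k → ψ (X j) ∈ f.range := by
    intro j hj
    have : σ j ≠ Fin.last m := by
      intro h
      apply hj
      have h2 : σ k = Fin.last m := Equiv.swap_apply_left _ _
      exact σ.injective (h.trans h2.symm)
    obtain ⟨i, hi⟩ := Fin.exists_castSucc_eq.mpr this
    refine ⟨Ideal.Quotient.mk _ (X i), ?_⟩
    rw [hf, hi, Equiv.swap_apply_self]
  have hkk : ψ (X k) ∈ f.range := by
    rw [map_sum, ← Finset.add_sum_erase _ _ (Finset.mem_univ k)] at hψ0
    have e : ∀ i, ψ (C (c i) * X i) = (c i : BottAux.SubBott n a) * ψ (X i) := by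
      intro i
      have e : (C (c i) : MvPolynomial (Fin (m + 1)) ℤ) = ((c i : ℤ) : MvPolynomial _ ℤ) := by simp
      rw [map_mul, e, map_intCast]
    simp only [e] at hψ0
    have hcd' : (c k : BottAux.SubBott n a) * (d : BottAux.SubBott n a) = 1 := by
      exact_mod_cast congrArg (Int.cast : ℤ → BottAux.SubBott n a) hcd
    have h3 : ψ (X k) = -((d : BottAux.SubBott n a) *
        ∑ i ∈ Finset.univ.erase k, (c i : BottAux.SubBott n a) * ψ (X i)) := by
      linear_combination (d : BottAux.SubBott n a) * hψ0 - ψ (X k) * hcd'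
    rw [h3]
    refine neg_mem (mul_mem (intCast_mem _ _) (sum_mem fun i hi => mul_mem (intCast_mem _ _) ?_))
    exact hne i (Finset.ne_of_mem_erase hi)
  have hall : ∀ q, ψ q ∈ f.range := by
    intro q
    induction q using MvPolynomial.induction_on with
    | C r => rw [eq_intCast C, map_intCast]; exact intCast_mem _ _
    | add p q hp hq => rw [map_add]; exact add_mem hp hq
    | mul_X p i hp =>
      rw [map_mul]
      refine mul_mem hp ?_
      by_cases h : i = k
      · rw [h]; exact hkk
      · exact hne i h
  have hfs : Function.Surjective f := by
    intro y
    obtain ⟨q, rfl⟩ := hψs y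
    exact hall q
  exact ⟨RingEquiv.ofBijective f ⟨BottAux.inj_of_surj n a φ f hfs, hfs⟩⟩
end

section
/- Let n, k be integers with 1 ≤ n < k, and let a_{ij} (1 ≤ i ≤ n, 1 ≤ j ≤ k) be integers such that ∏_{i=1}^{n} (1 + Σ_{j=1}^{k} a_{ij} x̄_j) = 1 in the ring ℤ[x_1,…,x_k]/(x_1²,…,x_k²). Then there exists an index j ∈ {1,…,k} such that a_{ij} = 0 for every i = 1,…,n. -/
open MvPolynomial

/-- The ideal `(x_1², …, x_k²)` of `ℤ[x_1,…,x_k]`. -/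
noncomputable def sqIdeal (k : ℕ) : Ideal (MvPolynomial (Fin k) ℤ) :=
  Ideal.span (Set.range fun j => X j ^ 2)

theorem prod_expand {R ι : Type*} [CommRing R] [DecidableEq ι] (u v : R) (hu : u * u = 0)
    (hv : v * v = 0) (a b : ι → ℤ) (s : Finset ι) :
    ∏ i ∈ s, (1 + ((a i : R) * u + (b i : R) * v)) =
      1 + ((∑ i ∈ s, a i : ℤ) : R) * u + ((∑ i ∈ s, b i : ℤ) : R) * v +
      (((∑ i ∈ s, a i) * (∑ i ∈ s, b i) - ∑ i ∈ s, a i * b i : ℤ) : R) * (u * v) := by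
  induction s using Finset.induction_on with
  | empty => simp
  | insert i s hi ih =>
    rw [Finset.prod_insert hi, ih, Finset.sum_insert hi, Finset.sum_insert hi,
      Finset.sum_insert hi]
    generalize (∑ i ∈ s, a i) = A
    generalize (∑ i ∈ s, b i) = B
    generalize (∑ i ∈ s, a i * b i) = S
    push_cast
    linear_combination ((a i : R) * A + (a i : R) * (A * B - S) * v) * hu +
      ((b i : R) * B + (b i : R) * (A * B - S) * u) * hv

theorem columns_orthogonal (n k : ℕ) (a : Fin n → Fin k → ℤ)
    (h : ∏ i : Fin n,
        Ideal.Quotient.mk (sqIdeal k) (1 + ∑ j, C (a i j) * X j) = 1)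
    (p q : Fin k) (hpq : p ≠ q) : ∑ i, a i p * a i q = 0 := by
  let u : (DualNumber (DualNumber ℤ)) := TrivSqZeroExt.inl (TrivSqZeroExt.inr 1)
  let v : (DualNumber (DualNumber ℤ)) := TrivSqZeroExt.inr 1
  have hu : u * u = 0 := by
    ext <;> simp [u]
  have hv : v * v = 0 := by simp only [v, TrivSqZeroExt.inr_mul_inr]
  let g : Fin k → (DualNumber (DualNumber ℤ)) := fun j => if j = p then u else if j = q then v else 0
  let f : MvPolynomial (Fin k) ℤ →+* (DualNumber (DualNumber ℤ)) := eval₂Hom (Int.castRingHom (DualNumber (DualNumber ℤ))) g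
  have hf : ∀ x ∈ sqIdeal k, f x = 0 := by
    intro x hx
    have : sqIdeal k ≤ RingHom.ker f := by
      rw [sqIdeal, Ideal.span_le]
      rintro _ ⟨j, rfl⟩
      rw [SetLike.mem_coe, RingHom.mem_ker, map_pow, sq]
      simp only [f, coe_eval₂Hom, eval₂_X, g]
      split_ifs <;> simp [hu, hv]
    exact this hx
  have h2 := congrArg (Ideal.Quotient.lift (sqIdeal k) f hf) h
  rw [map_prod, map_one] at h2
  have h3 : ∀ i, f (1 + ∑ j, C (a i j) * X j) = 1 + ((a i p : (DualNumber (DualNumber ℤ))) * u + (a i q : (DualNumber (DualNumber ℤ))) * v) := by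
    intro i
    simp only [map_add, map_one, map_sum, map_mul, f, coe_eval₂Hom, eval₂_X, eval₂_C]
    congr 1
    rw [Fintype.sum_eq_add p q hpq]
    · simp [g, hpq.symm]
    · rintro x ⟨h1, h2⟩
      simp [g, h1, h2]
  simp only [Ideal.Quotient.lift_mk, h3] at h2
  rw [prod_expand u v hu hv (fun i => a i p) (fun i => a i q)] at h2
  generalize (∑ i, a i p) = A at h2
  generalize (∑ i, a i q) = B at h2
  generalize (∑ i, a i p * a i q) = S at h2 ⊢
  have hA := congrArg (fun x : (DualNumber (DualNumber ℤ)) => x.fst.snd) h2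
  have hD := congrArg (fun x : (DualNumber (DualNumber ℤ)) => x.snd.snd) h2
  simp [u, v] at hA hD
  simp [hA] at hD
  exact hD

theorem stmt8 (n k : ℕ) (hn : 0 < n) (hnk : n < k) (a : Fin n → Fin k → ℤ)
    (h : ∏ i : Fin n,
        Ideal.Quotient.mk (sqIdeal k) (1 + ∑ j, C (a i j) * X j) = 1) :
    ∃ j, ∀ i, a i j = 0 := by
  by_contra! hc
  let w : Fin k → EuclideanSpace ℝ (Fin n) := fun j => WithLp.toLp 2 (fun i => (a i j : ℝ))
  have hli : LinearIndependent ℝ w := by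
    apply linearIndependent_of_ne_zero_of_inner_eq_zero (𝕜 := ℝ)
    · intro j hj
      obtain ⟨i, hi⟩ := hc j
      apply hi
      have := congrArg (fun x : EuclideanSpace ℝ (Fin n) => x i) hj
      simpa [w] using this
    · intro p q hpq
      have := columns_orthogonal n k a h q p hpq.symm
      simp only [w, PiLp.inner_apply, RCLike.inner_apply, conj_trivial]
      exact_mod_cast this
  have := hli.fintype_card_le_finrank
  simp at this
  omega
end

section
/- Let R be a commutative ring, n ≥ 0 an integer, and ℓ_0,…,ℓ_n ∈ R. Suppose the image of the polynomial ∏_{i=0}^{n} (X + ℓ_i) in R[X]/(X^{n+1}) is zero. Then every elementary symmetric polynomial e_q(ℓ_0,…,ℓ_n) vanishes for q = 1,…,n+1, and consequently ∏_{i=0}^{n} (1 + ℓ_i) = 1 in R. -/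
/-- key algebraic step in the proof of Theorem 1.1: if
`∏_{i=0}^{n} (X + ℓᵢ)` vanishes in `R[X]/(X^{n+1})`, then every elementary symmetric
polynomial `e_q(ℓ_0,…,ℓ_n)` vanishes for `q = 1,…,n+1`, and `∏ (1 + ℓᵢ) = 1` in `R`. -/
theorem stmt9 (R : Type*) [CommRing R] (n : ℕ) (l : Fin (n + 1) → R)
    (h : Ideal.Quotient.mk (Ideal.span {(Polynomial.X : Polynomial R) ^ (n + 1)})
      (∏ i, (Polynomial.X + Polynomial.C (l i))) = 0) :
    (∀ q : ℕ, 1 ≤ q → q ≤ n + 1 →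
      ∑ t ∈ Finset.univ.powersetCard q, ∏ i ∈ t, l i = 0) ∧
    ∏ i, (1 + l i) = 1 := by
  rw [Ideal.Quotient.eq_zero_iff_mem, Ideal.mem_span_singleton, Polynomial.X_pow_dvd_iff] at h
  have key : ∀ q : ℕ, 1 ≤ q → q ≤ n + 1 →
      ∑ t ∈ Finset.univ.powersetCard q, ∏ i ∈ t, l i = 0 := by
    intro q h1 h2
    have h3 := h (n + 1 - q) (by omega)
    rw [Finset.prod_X_add_C_coeff _ _ (by simp)] at h3
    have h4 : (Finset.univ : Finset (Fin (n + 1))).card - (n + 1 - q) = q := by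
      simp only [Finset.card_univ, Fintype.card_fin]; omega
    rwa [h4] at h3
  refine ⟨key, ?_⟩
  rw [Finset.prod_one_add, Finset.sum_powerset, Finset.sum_range_succ',
    Finset.sum_eq_zero]
  · simp
  · intro q hq
    apply key
    · omega
    · simpa using hq
end

section
/- Let n_1, n_2 ≥ 1 be integers and let a_1,…,a_{n_2} and a′_1,…,a′_{n_2} be integers. Set A = ℤ[x,y]/(x^{n_1+1}, y·∏_{i=1}^{n_2}(y + a_i x)) and A′ = ℤ[x,y]/(x^{n_1+1}, y·∏_{i=1}^{n_2}(y + a′_i x)). Suppose there exists a ring isomorphism φ : A′ → A mapping the ℤ-span of {x̄, ȳ} in A′ onto the ℤ-span of {x̄, ȳ} in A. Then there exist ε ∈ {1,−1} and an integer t such that (1 + ε t x̄) · ∏_{i=1}^{n_2} (1 + ε(a′_i + t) x̄) = ∏_{i=1}^{n_2} (1 + a_i x̄) in the ring ℤ[x]/(x^{n_1+1}). -/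
open MvPolynomial

/-- The ideal `(x^{n₁+1}, y ∏_{i=1}^{n₂} (y + aᵢ x))` of `ℤ[x,y]` (with `x = X 0`,
`y = X 1`), defining the cohomology ring of a 2-stage generalized Bott manifold. -/
noncomputable def twoStageIdeal (n₁ n₂ : ℕ) (a : Fin n₂ → ℤ) :
    Ideal (MvPolynomial (Fin 2) ℤ) :=
  Ideal.span {X 0 ^ (n₁ + 1), X 1 * ∏ i, (X 1 + C (a i) * X 0)}

/-- The cohomology ring `ℤ[x,y]/(x^{n₁+1}, y ∏ (y + aᵢ x))` of a 2-stage generalized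
Bott manifold. -/
abbrev TwoStage (n₁ n₂ : ℕ) (a : Fin n₂ → ℤ) : Type :=
  MvPolynomial (Fin 2) ℤ ⧸ twoStageIdeal n₁ n₂ a

/-- Membership in the ideal, spelled out. -/
lemma ts_mem {n₁ n₂ : ℕ} {a : Fin n₂ → ℤ} {Q : MvPolynomial (Fin 2) ℤ}
    (h : Q ∈ twoStageIdeal n₁ n₂ a) :
    ∃ U V : MvPolynomial (Fin 2) ℤ,
      U * X 0 ^ (n₁ + 1) + V * (X 1 * ∏ i, (X 1 + C (a i) * X 0)) = Q := by
  unfold twoStageIdeal at h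
  exact Ideal.mem_span_pair.1 h

/-- Evaluate at `x = T`, `y = r T` where `r` is a root. -/
lemma ts_eval {n₁ n₂ : ℕ} {a : Fin n₂ → ℤ} {Q : MvPolynomial (Fin 2) ℤ}
    (h : Q ∈ twoStageIdeal n₁ n₂ a) :
    ∃ u : ℤ, ∀ (R : Type) [CommRing R] (r : R), r * ∏ i, (r + (a i : R)) = 0 →
      ∃ W : Polynomial R, W.coeff 0 = (u : R) ∧
      aeval ![(Polynomial.X : Polynomial R), Polynomial.C r * Polynomial.X] Q
        = W * Polynomial.X ^ (n₁ + 1) := by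
  obtain ⟨U, V, rfl⟩ := ts_mem h
  refine ⟨constantCoeff U, fun R _ r hr => ⟨aeval ![(Polynomial.X : Polynomial R),
    Polynomial.C r * Polynomial.X] U, ?_, ?_⟩⟩
  · have : ((Polynomial.constantCoeff (R := R)).comp (aeval ![(Polynomial.X : Polynomial R),
      Polynomial.C r * Polynomial.X]).toRingHom) =
      (Int.castRingHom R).comp (constantCoeff (σ := Fin 2) (R := ℤ)) := by
      apply MvPolynomial.ringHom_ext
      · intro z; simp
      · intro i; fin_cases i <;> simp
    exact congrArg (fun f => f U) this
  · have h0 : aeval ![(Polynomial.X : Polynomial R), Polynomial.C r * Polynomial.X]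
        (X 1 * ∏ i, (X 1 + C (a i) * X 0) : MvPolynomial (Fin 2) ℤ) = 0 := by
      have e : aeval ![(Polynomial.X : Polynomial R), Polynomial.C r * Polynomial.X]
        (X 1 * ∏ i, (X 1 + C (a i) * X 0) : MvPolynomial (Fin 2) ℤ) =
        Polynomial.C (r * ∏ i, (r + (a i : R))) * Polynomial.X ^ (n₂ + 1) := by
        simp only [map_mul, map_prod, map_add, aeval_X, Matrix.cons_val_one, Matrix.cons_val_zero,
          algHom_C, Matrix.cons_val_fin_one, algebraMap_int_eq, eq_intCast, Polynomial.C_mul,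
          ← add_mul, Finset.prod_mul_distrib, Finset.prod_const, Finset.card_univ,
          Fintype.card_fin, map_intCast]
        ring
      rw [e, hr]; simp
    rw [map_add, map_mul, map_mul _ V, h0]; simp

/-- the image of `x` has `n₁+1`-st power zero -/
lemma ts_pow {n₁ n₂ : ℕ} {a : Fin n₂ → ℤ} {α β : ℤ}
    (h : (C α * X 0 + C β * X 1 : MvPolynomial (Fin 2) ℤ) ^ (n₁ + 1) ∈ twoStageIdeal n₁ n₂ a) :
    ∃ u : ℤ, ∀ (R : Type) [CommRing R] (r : R), r * ∏ i, (r + (a i : R)) = 0 →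
      ((α : R) + β * r) ^ (n₁ + 1) = u := by
  obtain ⟨u, hu⟩ := ts_eval h
  refine ⟨u, fun R _ r hr => ?_⟩
  obtain ⟨W, hW, e⟩ := hu R r hr
  have e2 : aeval ![(Polynomial.X : Polynomial R), Polynomial.C r * Polynomial.X]
      ((C α * X 0 + C β * X 1 : MvPolynomial (Fin 2) ℤ) ^ (n₁ + 1)) =
      Polynomial.C (((α : R) + β * r) ^ (n₁ + 1)) * Polynomial.X ^ (n₁ + 1) := by
    simp only [map_pow, map_add, map_mul, aeval_X, algHom_C, Matrix.cons_val_one,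
      Matrix.cons_val_zero, Matrix.cons_val_fin_one, algebraMap_int_eq, eq_intCast, map_intCast]
    rw [← mul_pow]; ring
  rw [e2] at e
  have := congrArg (fun p => Polynomial.coeff p (n₁ + 1)) e
  simp only [Polynomial.coeff_mul_X_pow', le_refl, if_true, Nat.sub_self,
    Polynomial.coeff_C_zero, hW] at this
  exact this

/-- `x̄, ȳ` are linearly independent. -/
lemma ts_indep {n₁ n₂ : ℕ} (hn₁ : 0 < n₁) (hn₂ : 0 < n₂) {a : Fin n₂ → ℤ} {p q : ℤ}
    (h : (C p * X 0 + C q * X 1 : MvPolynomial (Fin 2) ℤ) ∈ twoStageIdeal n₁ n₂ a) :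
    p = 0 ∧ q = 0 := by
  obtain ⟨U, V, e⟩ := ts_mem h
  have hz : ∀ k : ℕ, 0 < k → (DualNumber.eps : DualNumber ℤ) ^ (k + 1) = 0 := by
    intro k hk
    obtain ⟨m, rfl⟩ := Nat.exists_eq_succ_of_ne_zero hk.ne'
    rw [Nat.succ_eq_add_one, pow_succ, pow_succ, mul_assoc, DualNumber.eps_mul_eps, mul_zero]
  constructor
  · have := congrArg (aeval ![(DualNumber.eps : DualNumber ℤ), 0]) e
    simp [hz n₁ hn₁] at this
    simpa using (congrArg TrivSqZeroExt.snd this).symm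
  · have := congrArg (aeval ![0, (DualNumber.eps : DualNumber ℤ)]) e
    simp [← pow_succ', hz n₂ hn₂] at this
    simpa using (congrArg TrivSqZeroExt.snd this).symm

/-- a double root -/
lemma ts_double {n : ℕ} {α β v u s : ℤ} (hu : ((α : DualNumber ℤ) + (β : DualNumber ℤ) *
      ((s : DualNumber ℤ) + DualNumber.eps)) ^ (n + 1) = (u : DualNumber ℤ)) (hv : v = α + β * s) (hβ : β ≠ 0) :
    v = 0 := by
  have e : ((α : DualNumber ℤ) + (β : DualNumber ℤ) * ((s : DualNumber ℤ) + DualNumber.eps)) =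
    TrivSqZeroExt.inl v + TrivSqZeroExt.inr β := by
    ext <;> simp [hv]
  rw [e] at hu
  have := congrArg TrivSqZeroExt.snd hu
  rw [TrivSqZeroExt.snd_pow] at this
  simp [hβ] at this
  have h1 : (n : ℤ) + 1 ≠ 0 := by positivity
  rcases this with h | h
  · exact absurd h h1
  · exact h.1

lemma ts_zero {n₁ n₂ : ℕ} (hn₂ : 2 ≤ n₂) {a : Fin n₂ → ℤ} {α β : ℤ} (hβ : β ≠ 0)
    (h : (C α * X 0 + C β * X 1 : MvPolynomial (Fin 2) ℤ) ^ (n₁ + 1) ∈ twoStageIdeal n₁ n₂ a) :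
    ∀ i, a i = 0 := by
  obtain ⟨u, hu⟩ := ts_pow h
  have h0 : α ^ (n₁ + 1) = u := by simpa using hu ℤ 0 (by simp)
  have hi : ∀ i, (α - β * a i) ^ (n₁ + 1) = u := by
    intro i
    have := hu ℤ (-a i) (by
      rw [Finset.prod_eq_zero (Finset.mem_univ i) (by simp)]; simp)
    simpa [sub_eq_add_neg] using this
  have key : ∀ i, α - β * a i = α ∨ α - β * a i = -α := by
    intro i
    have := (hi i).trans h0.symm
    have h2 : (α - β * a i).natAbs ^ (n₁ + 1) = α.natAbs ^ (n₁ + 1) := by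
      rw [← Int.natAbs_pow, ← Int.natAbs_pow, this]
    exact Int.natAbs_eq_natAbs_iff.1 (Nat.pow_left_injective (n := n₁ + 1) (by omega) h2)
  -- double roots force alpha = 0
  have hα : α = 0 := by
    have dz : ∀ i, a i = 0 → α = 0 := by
      intro i hai
      refine ts_double (s := 0) (n := n₁) (u := u) (hu _ _ ?_) (by simp) hβ
      rw [← Finset.mul_prod_erase _ _ (Finset.mem_univ i), hai, ← mul_assoc]
      simp
    have dd : ∀ i j, i ≠ j → a i = a j → α - β * a i = 0 := by
      intro i j hij e
      refine ts_double (s := - a i) (n := n₁) (u := u) (hu _ _ ?_) (by ring) hβ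
      rw [← Finset.mul_prod_erase _ _ (Finset.mem_univ i),
        ← Finset.mul_prod_erase _ _ (Finset.mem_erase.2 ⟨hij.symm, Finset.mem_univ j⟩),
        ← e]
      have h2 : (DualNumber.eps : DualNumber ℤ) * DualNumber.eps = 0 := DualNumber.eps_mul_eps
      simp only [Int.cast_neg, neg_add_cancel_comm]
      linear_combination (-((a i : ℤ) : DualNumber ℤ) + DualNumber.eps) *
        (∏ x ∈ (Finset.univ.erase i).erase j, (-((a i : ℤ) : DualNumber ℤ) + DualNumber.eps +
          ((a x : ℤ) : DualNumber ℤ))) * h2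
    let i : Fin n₂ := ⟨0, by omega⟩
    let j : Fin n₂ := ⟨1, by omega⟩
    have hij : i ≠ j := by simp [i, j]
    rcases key i with h1 | h1
    · exact dz i (by simpa [hβ] using h1)
    rcases key j with h2 | h2
    · exact dz j (by simpa [hβ] using h2)
    have e : a i = a j := by
      have : β * a i = β * a j := by linarith
      exact mul_left_cancel₀ hβ this
    have := dd i j hij e
    omega
  intro i
  have := key i
  simpa [hα, hβ] using this

/-- The case `β = 0`, in an arbitrary ring. -/
lemma ts_case0_aux {n₁ n₂ : ℕ} {a a' : Fin n₂ → ℤ} {α γ δ : ℤ} (hδ : δ = 1 ∨ δ = -1)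
    (h : ((C γ * X 0 + C δ * X 1) * ∏ i, ((C γ * X 0 + C δ * X 1) + C (a' i) * (C α * X 0)) :
      MvPolynomial (Fin 2) ℤ) ∈ twoStageIdeal n₁ n₂ a) (S : Type) [CommRing S] (x : S) (hx0 : x ^ (n₁ + 1) = 0) :
    ∏ i, (1 + (a i : S) * x) = (1 + δ * γ * x) *
      ∏ i, (1 + (δ * γ * x + δ * α * a' i * x)) := by
  obtain ⟨U, V, e⟩ := ts_mem h
  have hδ2 : δ * δ = 1 := by rcases hδ with rfl | rfl <;> rfl
  have hδS : (δ : S) * δ = 1 := by rw [← Int.cast_mul, hδ2, Int.cast_one]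
  have e' := congrArg (aeval ![(Polynomial.C x : Polynomial S), Polynomial.X]) e
  simp only [map_add, map_mul, map_pow, map_prod, aeval_X, algHom_C, Matrix.cons_val_one,
      Matrix.cons_val_zero, Matrix.cons_val_fin_one, algebraMap_int_eq, eq_intCast, map_intCast] at e'
  rw [← Polynomial.C_pow, hx0, Polynomial.C_0, mul_zero, zero_add] at e'
  -- monic polynomials
  set F : Polynomial S := Polynomial.X * ∏ i, (Polynomial.X + ((a i : ℤ) : Polynomial S) *
    Polynomial.C x) with hF
  set G : Polynomial S := (Polynomial.X + Polynomial.C (δ * γ * x)) *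
    ∏ i, (Polynomial.X + Polynomial.C (δ * γ * x + δ * α * a' i * x)) with hG
  have hδP : (δ : Polynomial S) * δ = 1 := by
    exact_mod_cast congrArg (Int.cast : ℤ → Polynomial S) hδ2
  have hFG : ∃ W, W * F = G := by
    refine ⟨(δ : Polynomial S) ^ (n₂ + 1) * aeval ![(Polynomial.C x : Polynomial S), Polynomial.X] V,
      ?_⟩
    rw [mul_assoc, e', hG, pow_succ', mul_mul_mul_comm]
    congr 1
    · simp only [Polynomial.C_mul, map_intCast]
      linear_combination Polynomial.X * hδP
    · have : (δ : Polynomial S) ^ n₂ = ∏ i : Fin n₂, (δ : Polynomial S) := by simp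
      rw [this, ← Finset.prod_mul_distrib]
      refine Finset.prod_congr rfl fun i _ => ?_
      simp only [Polynomial.C_mul, Polynomial.C_add, map_intCast]
      linear_combination Polynomial.X * hδP
  have hFe : F = Polynomial.X * ∏ i, (Polynomial.X + Polynomial.C ((a i : S) * x)) := by
    simp [hF]
  have hFm : F.Monic := by
    rw [hFe]
    exact Polynomial.monic_X.mul (Polynomial.monic_prod_of_monic _ _ fun i _ =>
      Polynomial.monic_X_add_C _)
  have hGm : G.Monic := by
    rw [hG]
    exact (Polynomial.monic_X_add_C _).mul (Polynomial.monic_prod_of_monic _ _ fun i _ =>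
      Polynomial.monic_X_add_C _)
  have hEq : F = G := by
    rcases subsingleton_or_nontrivial S with hs | hs
    · exact Subsingleton.elim _ _
    obtain ⟨W, hW⟩ := hFG
    refine (Polynomial.eq_of_monic_of_dvd_of_natDegree_le hFm hGm ⟨W, by rw [← hW, mul_comm]⟩ ?_).symm
    rw [hFe, hG, Polynomial.Monic.natDegree_mul (Polynomial.monic_X_add_C _)
      (Polynomial.monic_prod_of_monic _ _ fun i _ => Polynomial.monic_X_add_C _),
      Polynomial.Monic.natDegree_mul Polynomial.monic_X
      (Polynomial.monic_prod_of_monic _ _ fun i _ => Polynomial.monic_X_add_C _),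
      Polynomial.natDegree_prod_of_monic _ _ fun i _ => Polynomial.monic_X_add_C _,
      Polynomial.natDegree_prod_of_monic _ _ fun i _ => Polynomial.monic_X_add_C _]
    simp only [Polynomial.natDegree_X_add_C, Polynomial.natDegree_X]
    exact le_rfl
  have hev := congrArg (Polynomial.eval 1) hEq
  rw [hFe, hG] at hev
  simp only [Polynomial.eval_mul, Polynomial.eval_prod, Polynomial.eval_add, Polynomial.eval_X,
    Polynomial.eval_C, one_mul] at hev
  exact hev

/-- The case `β = 0`. -/
lemma ts_case0 {n₁ n₂ : ℕ} {a a' : Fin n₂ → ℤ} {α γ δ : ℤ} (hα : α = 1 ∨ α = -1)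
    (hδ : δ = 1 ∨ δ = -1)
    (h : ((C γ * X 0 + C δ * X 1) * ∏ i, ((C γ * X 0 + C δ * X 1) + C (a' i) * (C α * X 0)) :
      MvPolynomial (Fin 2) ℤ) ∈ twoStageIdeal n₁ n₂ a) :
    ∃ ε t : ℤ, (ε = 1 ∨ ε = -1) ∧
      Ideal.Quotient.mk (Ideal.span {(Polynomial.X : Polynomial ℤ) ^ (n₁ + 1)})
        ((1 + Polynomial.C (ε * t) * Polynomial.X) *
          ∏ i, (1 + Polynomial.C (ε * (a' i + t)) * Polynomial.X)) =
      Ideal.Quotient.mk (Ideal.span {(Polynomial.X : Polynomial ℤ) ^ (n₁ + 1)})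
        (∏ i, (1 + Polynomial.C (a i) * Polynomial.X)) := by
  set S := Polynomial ℤ ⧸ Ideal.span {(Polynomial.X : Polynomial ℤ) ^ (n₁ + 1)} with hS
  set x : S := Ideal.Quotient.mk _ Polynomial.X with hx
  have hx0 : x ^ (n₁ + 1) = 0 := by
    rw [hx, ← map_pow]
    exact Ideal.Quotient.eq_zero_iff_mem.2 (Ideal.mem_span_singleton_self _)
  have hC : ∀ z : ℤ, (Ideal.Quotient.mk (Ideal.span {(Polynomial.X : Polynomial ℤ) ^ (n₁ + 1)})
    (Polynomial.C z)) = (z : S) := by intro z; simp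
  have hα2 : α * α = 1 := by rcases hα with rfl | rfl <;> rfl
  have hαS : (α : S) * α = 1 := by rw [← Int.cast_mul, hα2, Int.cast_one]
  have hev := ts_case0_aux hδ h S x hx0
  refine ⟨δ * α, α * γ, ?_, ?_⟩
  · rcases hα with rfl | rfl <;> rcases hδ with rfl | rfl <;> simp
  · simp only [map_mul, map_prod, map_add, map_one, hC, ← hx]
    rw [hev]
    push_cast
    congr 1
    · linear_combination (δ : S) * γ * x * hαS
    · refine Finset.prod_congr rfl fun i _ => ?_
      linear_combination (δ : S) * γ * x * hαS

lemma ts_parity {a : Fin 1 → ℤ} {α β : ℤ} (hβ : β ≠ 0)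
    (h : (C α * X 0 + C β * X 1 : MvPolynomial (Fin 2) ℤ) ^ (1 + 1) ∈ twoStageIdeal 1 1 a) :
    β * a 0 = 2 * α := by
  obtain ⟨u, hu⟩ := ts_pow h
  have := hu (QuadraticAlgebra ℤ 0 (-(a 0))) QuadraticAlgebra.omega (by
    ext <;> simp)
  have := congrArg QuadraticAlgebra.im this
  simp [pow_succ] at this
  have h2 : β * (β * a 0) = β * (2 * α) := by linarith
  exact mul_left_cancel₀ hβ h2

lemma ts_disc {n₁ : ℕ} (hn₁ : 2 ≤ n₁) {a a' : Fin 1 → ℤ} {α β γ δ : ℤ}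
    (hd : (α * δ - β * γ) ^ 2 = 1)
    (h : ((C γ * X 0 + C δ * X 1) * ∏ i, ((C γ * X 0 + C δ * X 1) +
      C (a' i) * (C α * X 0 + C β * X 1)) :
      MvPolynomial (Fin 2) ℤ) ∈ twoStageIdeal n₁ 1 a) : a 0 ∣ a' 0 := by
  obtain ⟨u, hu⟩ := ts_eval h
  obtain ⟨W, -, e⟩ := hu (QuadraticAlgebra ℤ 0 (-(a 0))) QuadraticAlgebra.omega (by
    ext <;> simp)
  set w : QuadraticAlgebra ℤ 0 (-(a 0)) := QuadraticAlgebra.omega with hw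
  have e2 : aeval ![(Polynomial.X : Polynomial (QuadraticAlgebra ℤ 0 (-(a 0)))),
      Polynomial.C w * Polynomial.X]
      ((C γ * X 0 + C δ * X 1) * ∏ i, ((C γ * X 0 + C δ * X 1) +
      C (a' i) * (C α * X 0 + C β * X 1)) : MvPolynomial (Fin 2) ℤ) =
      Polynomial.C ((γ + δ * w) * (γ + δ * w + a' 0 * (α + β * w))) * Polynomial.X ^ 2 := by
    simp only [map_add, map_mul, aeval_X, algHom_C, Matrix.cons_val_one, Fin.prod_univ_one,
      Matrix.cons_val_zero, Matrix.cons_val_fin_one, algebraMap_int_eq, eq_intCast, map_intCast]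
    ring
  rw [e2] at e
  have := congrArg (fun p => Polynomial.coeff p 2) e
  simp only [Polynomial.coeff_mul_X_pow', le_refl, if_true, Nat.sub_self, Polynomial.coeff_C_zero,
    if_neg (show ¬ n₁ + 1 ≤ 2 by omega)] at this
  have h1 := congrArg QuadraticAlgebra.re this
  have h2 := congrArg QuadraticAlgebra.im this
  simp [hw] at h1 h2
  have h1' : γ * (γ + a' 0 * α) = 0 := by simpa using h1
  have key : (a' 0) ^ 2 = (δ * (δ + a' 0 * β)) ^ 2 * a 0 ^ 2 := by
    have h2' : γ * (δ + a' 0 * β) + δ * (γ + a' 0 * α) = δ * (δ + a' 0 * β) * a 0 := by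
      linarith
    rw [← mul_pow, ← h2']
    linear_combination (-(a' 0)^2) * hd - 4 * δ * (δ + a' 0 * β) * h1'
  exact (Int.pow_dvd_pow_iff (n := 2) (by norm_num)).1 ⟨_, key.trans (mul_comm _ _)⟩

/-- Matrix of a ring hom preserving the degree two part. -/
lemma ts_hom {n₁ n₂ : ℕ} {a a' : Fin n₂ → ℤ}
    (φ : TwoStage n₁ n₂ a' →+* TwoStage n₁ n₂ a) {α β γ δ : ℤ}
    (h0 : φ (Ideal.Quotient.mk _ (X 0)) = Ideal.Quotient.mk _ (C α * X 0 + C β * X 1))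
    (h1 : φ (Ideal.Quotient.mk _ (X 1)) = Ideal.Quotient.mk _ (C γ * X 0 + C δ * X 1)) :
    (C α * X 0 + C β * X 1 : MvPolynomial (Fin 2) ℤ) ^ (n₁ + 1) ∈ twoStageIdeal n₁ n₂ a ∧
    ((C γ * X 0 + C δ * X 1) * ∏ i, ((C γ * X 0 + C δ * X 1) +
      C (a' i) * (C α * X 0 + C β * X 1)) :
      MvPolynomial (Fin 2) ℤ) ∈ twoStageIdeal n₁ n₂ a := by
  constructor
  · rw [← Ideal.Quotient.eq_zero_iff_mem, map_pow, ← h0, ← map_pow, ← map_pow]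
    rw [Ideal.Quotient.eq_zero_iff_mem.2, map_zero]
    exact Ideal.subset_span (by simp)
  · have : Ideal.Quotient.mk (twoStageIdeal n₁ n₂ a') (X 1 * ∏ i, (X 1 + C (a' i) * X 0)) = 0 :=
      Ideal.Quotient.eq_zero_iff_mem.2 (Ideal.subset_span (by simp))
    have hc := congrArg φ this
    rw [← Ideal.Quotient.eq_zero_iff_mem]
    simp only [map_mul, map_prod, map_add, map_zero] at hc h0 h1 ⊢
    rw [h0, h1] at hc
    simpa using hc

lemma ts_span {n₁ n₂ : ℕ} {a : Fin n₂ → ℤ} {z : TwoStage n₁ n₂ a}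
    (h : z ∈ Submodule.span ℤ
        {Ideal.Quotient.mk (twoStageIdeal n₁ n₂ a) (X 0),
         Ideal.Quotient.mk (twoStageIdeal n₁ n₂ a) (X 1)}) :
    ∃ p q : ℤ, z = Ideal.Quotient.mk _ (C p * X 0 + C q * X 1) := by
  obtain ⟨p, q, e⟩ := Submodule.mem_span_pair.1 h
  refine ⟨p, q, ?_⟩
  rw [← e]
  simp

lemma ts_comp {n₁ n₂ : ℕ} (hn₁ : 0 < n₁) (hn₂ : 0 < n₂) {a a' : Fin n₂ → ℤ}
    (φ : TwoStage n₁ n₂ a' ≃+* TwoStage n₁ n₂ a) {α β γ δ α' β' γ' δ' : ℤ}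
    (h0 : φ (Ideal.Quotient.mk _ (X 0)) = Ideal.Quotient.mk _ (C α * X 0 + C β * X 1))
    (h1 : φ (Ideal.Quotient.mk _ (X 1)) = Ideal.Quotient.mk _ (C γ * X 0 + C δ * X 1))
    (k0 : φ.symm (Ideal.Quotient.mk _ (X 0)) = Ideal.Quotient.mk _ (C α' * X 0 + C β' * X 1))
    (k1 : φ.symm (Ideal.Quotient.mk _ (X 1)) = Ideal.Quotient.mk _ (C γ' * X 0 + C δ' * X 1)) :
    α * α' + β * γ' = 1 ∧ α * β' + β * δ' = 0 ∧ γ * α' + δ * γ' = 0 ∧ γ * β' + δ * δ' = 1 := by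
  have e0 := congrArg φ.symm h0
  have e1 := congrArg φ.symm h1
  simp only [RingEquiv.symm_apply_apply, map_add, map_mul] at e0 e1 k0 k1
  rw [k0, k1] at e0 e1
  have m0 : (C (α * α' + β * γ' - 1) * X 0 + C (α * β' + β * δ') * X 1 :
      MvPolynomial (Fin 2) ℤ) ∈ twoStageIdeal n₁ n₂ a' := by
    rw [← Ideal.Quotient.eq_zero_iff_mem]
    simp at e0 ⊢
    linear_combination -e0
  have m1 : (C (γ * α' + δ * γ') * X 0 + C (γ * β' + δ * δ' - 1) * X 1 :
      MvPolynomial (Fin 2) ℤ) ∈ twoStageIdeal n₁ n₂ a' := by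
    rw [← Ideal.Quotient.eq_zero_iff_mem]
    simp at e1 ⊢
    linear_combination -e1
  have := ts_indep hn₁ hn₂ m0
  have := ts_indep hn₁ hn₂ m1
  omega

lemma ts_even {a a' α β γ δ α' β' γ' δ' : ℤ}
    (r1 : α * α' + β * γ' = 1) (r2 : α * β' + β * δ' = 0) (r4 : γ * β' + δ * δ' = 1)
    (h : β * a = 2 * α) (h' : β' * a' = 2 * α') (hβ : β ≠ 0) (ha : 2 ∣ a) : 2 ∣ a' := by
  obtain ⟨k, rfl⟩ := ha
  have hα : α = β * k := by linarith
  subst hα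
  have hd : δ' = -k * β' := by
    apply mul_left_cancel₀ hβ; linarith
  subst hd
  have hu : β' * (γ - k * δ) = 1 := by linarith
  refine ⟨α' * (γ - k * δ), ?_⟩
  linear_combination (-a') * hu + (γ - k * δ) * h'

/-- implication (3) ⇒ (1) of Theorem 6.1: a graded ring isomorphism
between the cohomology rings of two 2-stage generalized Bott manifolds produces
`ε = ±1` and an integer `t` with
`(1 + εt x̄) ∏ᵢ (1 + ε(a'ᵢ + t) x̄) = ∏ᵢ (1 + aᵢ x̄)` in `ℤ[x]/(x^{n₁+1})`. -/
theorem stmt10 (n₁ n₂ : ℕ) (hn₁ : 0 < n₁) (hn₂ : 0 < n₂) (a a' : Fin n₂ → ℤ)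
    (φ : TwoStage n₁ n₂ a' ≃+* TwoStage n₁ n₂ a)
    (hφ : φ '' (Submodule.span ℤ
        {Ideal.Quotient.mk (twoStageIdeal n₁ n₂ a') (X 0),
         Ideal.Quotient.mk (twoStageIdeal n₁ n₂ a') (X 1)} : Set (TwoStage n₁ n₂ a')) =
      (Submodule.span ℤ
        {Ideal.Quotient.mk (twoStageIdeal n₁ n₂ a) (X 0),
         Ideal.Quotient.mk (twoStageIdeal n₁ n₂ a) (X 1)} : Set (TwoStage n₁ n₂ a))) :
    ∃ ε t : ℤ, (ε = 1 ∨ ε = -1) ∧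
      Ideal.Quotient.mk (Ideal.span {(Polynomial.X : Polynomial ℤ) ^ (n₁ + 1)})
        ((1 + Polynomial.C (ε * t) * Polynomial.X) *
          ∏ i, (1 + Polynomial.C (ε * (a' i + t)) * Polynomial.X)) =
      Ideal.Quotient.mk (Ideal.span {(Polynomial.X : Polynomial ℤ) ^ (n₁ + 1)})
        (∏ i, (1 + Polynomial.C (a i) * Polynomial.X)) := by
  have mem0 : φ (Ideal.Quotient.mk _ (X 0)) ∈ Submodule.span ℤ
        {Ideal.Quotient.mk (twoStageIdeal n₁ n₂ a) (X 0),
         Ideal.Quotient.mk (twoStageIdeal n₁ n₂ a) (X 1)} := by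
    rw [← SetLike.mem_coe, ← hφ]
    exact ⟨_, Submodule.subset_span (by simp), rfl⟩
  have mem1 : φ (Ideal.Quotient.mk _ (X 1)) ∈ Submodule.span ℤ
        {Ideal.Quotient.mk (twoStageIdeal n₁ n₂ a) (X 0),
         Ideal.Quotient.mk (twoStageIdeal n₁ n₂ a) (X 1)} := by
    rw [← SetLike.mem_coe, ← hφ]
    exact ⟨_, Submodule.subset_span (by simp), rfl⟩
  have back : ∀ z ∈ Submodule.span ℤ
        {Ideal.Quotient.mk (twoStageIdeal n₁ n₂ a) (X 0),
         Ideal.Quotient.mk (twoStageIdeal n₁ n₂ a) (X 1)}, φ.symm z ∈ Submodule.span ℤ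
        {Ideal.Quotient.mk (twoStageIdeal n₁ n₂ a') (X 0),
         Ideal.Quotient.mk (twoStageIdeal n₁ n₂ a') (X 1)} := by
    intro z hz
    rw [← SetLike.mem_coe, ← hφ] at hz
    obtain ⟨w, hw, rfl⟩ := hz
    rw [RingEquiv.symm_apply_apply]
    exact hw
  obtain ⟨α, β, h0⟩ := ts_span mem0
  obtain ⟨γ, δ, h1⟩ := ts_span mem1
  obtain ⟨α', β', k0⟩ := ts_span (back _ (Submodule.subset_span (Set.mem_insert _ _)))
  obtain ⟨γ', δ', k1⟩ := ts_span (back _ (Submodule.subset_span (Set.mem_insert_of_mem _ rfl)))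
  obtain ⟨r1, r2, r3, r4⟩ := ts_comp hn₁ hn₂ φ h0 h1 k0 k1
  obtain ⟨s1, s2, s3, s4⟩ := ts_comp hn₁ hn₂ φ.symm k0 k1 h0 h1
  obtain ⟨P, Q⟩ := ts_hom (φ : TwoStage n₁ n₂ a' →+* TwoStage n₁ n₂ a) h0 h1
  obtain ⟨P', Q'⟩ := ts_hom (φ.symm : TwoStage n₁ n₂ a →+* TwoStage n₁ n₂ a') k0 k1
  by_cases hβ : β = 0
  · subst hβ
    have hα : α = 1 ∨ α = -1 := by
      apply Int.isUnit_iff.1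
      exact IsUnit.of_mul_eq_one α' (by linarith)
    have hδ : δ = 1 ∨ δ = -1 := by
      apply Int.isUnit_iff.1
      exact IsUnit.of_mul_eq_one δ' (by linarith)
    refine ts_case0 (γ := γ) hα hδ ?_
    simpa using Q
  have hβ' : β' ≠ 0 := by
    rintro rfl
    have : δ' = 0 := by simpa [hβ] using r2
    simp [this] at r4
  rcases Nat.lt_or_ge n₂ 2 with h2 | h2
  · obtain rfl : n₂ = 1 := by omega
    rcases Nat.lt_or_ge n₁ 2 with h3 | h3
    · obtain rfl : n₁ = 1 := by omega
      have p := ts_parity hβ P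
      have p' := ts_parity hβ' P'
      have q1 := ts_even r1 r2 r4 p p' hβ
      have q2 := ts_even s1 s2 s4 p' p hβ'
      obtain ⟨t, ht⟩ : ∃ t, a 0 = a' 0 + 2 * t := ⟨(a 0 - a' 0) / 2, by omega⟩
      refine ⟨1, t, Or.inl rfl, ?_⟩
      rw [Ideal.Quotient.eq, Ideal.mem_span_singleton]
      refine ⟨Polynomial.C (t * (a' 0 + t)), ?_⟩
      simp [ht]
      ring
    · have hd : (α * δ - β * γ) ^ 2 = 1 := by
        have : (α * δ - β * γ) * (α' * δ' - β' * γ') = 1 := by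
          linear_combination (γ * β' + δ * δ') * r1 + r4 - (γ * α' + δ * γ') * r2
        rcases Int.isUnit_iff.1 (IsUnit.of_mul_eq_one _ this) with h | h <;> simp [h]
      have hd' : (α' * δ' - β' * γ') ^ 2 = 1 := by
        have : (α' * δ' - β' * γ') * (α * δ - β * γ) = 1 := by
          linear_combination (γ * β' + δ * δ') * r1 + r4 - (γ * α' + δ * γ') * r2
        rcases Int.isUnit_iff.1 (IsUnit.of_mul_eq_one _ this) with h | h <;> simp [h]
      have d1 := ts_disc h3 hd Q
      have d2 := ts_disc h3 hd' Q'
      rcases Int.natAbs_eq_natAbs_iff.1 (Int.natAbs_eq_of_dvd_dvd d1 d2) with h | h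
      · exact ⟨1, 0, Or.inl rfl, by simp [h]⟩
      · exact ⟨-1, 0, Or.inr rfl, by simp [h]⟩
  · have z := ts_zero h2 hβ P
    have z' := ts_zero h2 hβ' P'
    exact ⟨1, 0, Or.inl rfl, by simp [z, z']⟩
end

section
/- Let n ≥ 2 and let a, a′ be integers. There exists a ring isomorphism φ : ℤ[x,y]/(x^{n+1}, y(y + a′x)) → ℤ[x,y]/(x^{n+1}, y(y + ax)) mapping the ℤ-span of {x̄, ȳ} onto the ℤ-span of {x̄, ȳ} if and only if a′ = a or a′ = −a. -/
open MvPolynomial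

/-- The ideal `(x^{n+1}, y(y + ax))` of `ℤ[x,y]` (with `x = X 0`, `y = X 1`), defining
the cohomology ring of the `ℂP¹`-bundle `P(ℂ ⊕ γ^{ax})` over `ℂPⁿ`. -/
noncomputable def hirzIdeal (n : ℕ) (a : ℤ) : Ideal (MvPolynomial (Fin 2) ℤ) :=
  Ideal.span {X 0 ^ (n + 1), X 1 * (X 1 + C a * X 0)}

lemma hirz_mem {n : ℕ} (hn : 2 ≤ n) {a : ℤ} {P : MvPolynomial (Fin 2) ℤ}
    (h : P ∈ hirzIdeal n a) : ∃ c : ℤ, ∀ l m : ℤ,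
      (aeval (R := ℤ) ![Polynomial.C l * Polynomial.X, Polynomial.C m * Polynomial.X] P).coeff 1 = 0
      ∧ (aeval (R := ℤ) ![Polynomial.C l * Polynomial.X, Polynomial.C m * Polynomial.X] P).coeff 2
        = c * (m * (m + a * l)) := by
  obtain ⟨u, v, rfl⟩ := Ideal.mem_span_pair.1 h
  refine ⟨constantCoeff v, fun l m => ?_⟩
  obtain ⟨k, rfl⟩ := Nat.exists_eq_add_of_le hn
  set f := aeval (R := ℤ) ![Polynomial.C l * Polynomial.X, Polynomial.C m * Polynomial.X] with hf
  have hv : (f v).coeff 0 = constantCoeff v := by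
    have : (Polynomial.constantCoeff.comp f.toRingHom) = (constantCoeff : MvPolynomial (Fin 2) ℤ →+* ℤ) := by
      apply MvPolynomial.ringHom_ext
      · intro r; simp
      · intro i; fin_cases i <;> simp [hf]
    exact congrArg (fun g => g v) this
  have e : f (u * X 0 ^ (2 + k + 1) + v * (X 1 * (X 1 + C a * X 0)))
      = (f u * Polynomial.C (l ^ (2 + k + 1)) * Polynomial.X ^ k) * Polynomial.X ^ 3
        + (f v * Polynomial.C (m * (m + a * l))) * Polynomial.X ^ 2 := by
    have h0 : f (X 0) = Polynomial.C l * Polynomial.X := by simp [hf]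
    have h1 : f (X 1) = Polynomial.C m * Polynomial.X := by simp [hf]
    have h2 : f (C a) = Polynomial.C a := by simp [hf]
    simp only [map_add, map_mul, map_pow, h0, h1, h2]
    ring
  rw [e]
  constructor
  · simp [Polynomial.coeff_mul_X_pow']
  · simp [Polynomial.coeff_mul_X_pow', hv]

lemma hirz_lin {n : ℕ} (hn : 2 ≤ n) {a p q : ℤ}
    (h : Ideal.Quotient.mk (hirzIdeal n a) (C p * X 0 + C q * X 1) = 0) : p = 0 ∧ q = 0 := by
  obtain ⟨c, hc⟩ := hirz_mem hn (Ideal.Quotient.eq_zero_iff_mem.1 h)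
  have h1 := (hc 1 0).1
  have h2 := (hc 0 1).1
  simp at h1 h2
  exact ⟨h1, h2⟩

lemma hirz_quad {n : ℕ} (hn : 2 ≤ n) {a p q r s b : ℤ}
    (h : Ideal.Quotient.mk (hirzIdeal n a) ((C r * X 0 + C s * X 1) *
      ((C r * X 0 + C s * X 1) + C b * (C p * X 0 + C q * X 1))) = 0) :
    ∃ c : ℤ, ∀ l m : ℤ, (r * l + s * m) * ((r * l + s * m) + b * (p * l + q * m))
      = c * (m * (m + a * l)) := by
  obtain ⟨c, hc⟩ := hirz_mem hn (Ideal.Quotient.eq_zero_iff_mem.1 h)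
  refine ⟨c, fun l m => ?_⟩
  rw [← (hc l m).2]
  have : (aeval (R := ℤ) ![Polynomial.C l * Polynomial.X, Polynomial.C m * Polynomial.X]
      ((C r * X 0 + C s * X 1) * ((C r * X 0 + C s * X 1) + C b * (C p * X 0 + C q * X 1)) :
        MvPolynomial (Fin 2) ℤ)) = 
      Polynomial.C ((r * l + s * m) * ((r * l + s * m) + b * (p * l + q * m)))
        * Polynomial.X ^ 2 := by
    simp
    ring
  rw [this, Polynomial.coeff_C_mul_X_pow]
  simp

lemma hirz_span {n : ℕ} {a : ℤ} {z : MvPolynomial (Fin 2) ℤ ⧸ hirzIdeal n a}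
    (h : z ∈ Submodule.span ℤ {Ideal.Quotient.mk (hirzIdeal n a) (X 0),
           Ideal.Quotient.mk (hirzIdeal n a) (X 1)}) :
    ∃ p q : ℤ, z = Ideal.Quotient.mk (hirzIdeal n a) (C p * X 0 + C q * X 1) := by
  obtain ⟨p, q, rfl⟩ := Submodule.mem_span_pair.1 h
  exact ⟨p, q, by simp [zsmul_eq_mul]⟩

lemma hirz_dvd (n : ℕ) (hn : 2 ≤ n) (a a' : ℤ)
    (φ : (MvPolynomial (Fin 2) ℤ ⧸ hirzIdeal n a') ≃+*
        (MvPolynomial (Fin 2) ℤ ⧸ hirzIdeal n a))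
    (h : φ '' (Submodule.span ℤ
          {Ideal.Quotient.mk (hirzIdeal n a') (X 0),
           Ideal.Quotient.mk (hirzIdeal n a') (X 1)} :
            Set (MvPolynomial (Fin 2) ℤ ⧸ hirzIdeal n a')) =
        (Submodule.span ℤ
          {Ideal.Quotient.mk (hirzIdeal n a) (X 0),
           Ideal.Quotient.mk (hirzIdeal n a) (X 1)} :
            Set (MvPolynomial (Fin 2) ℤ ⧸ hirzIdeal n a))) : a ∣ a' := by
  have hx' : φ (Ideal.Quotient.mk (hirzIdeal n a') (X 0)) ∈ (Submodule.span ℤ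
          {Ideal.Quotient.mk (hirzIdeal n a) (X 0), Ideal.Quotient.mk (hirzIdeal n a) (X 1)}) := by
    rw [← SetLike.mem_coe, ← h]
    exact ⟨_, Submodule.subset_span (by simp), rfl⟩
  have hy' : φ (Ideal.Quotient.mk (hirzIdeal n a') (X 1)) ∈ (Submodule.span ℤ
          {Ideal.Quotient.mk (hirzIdeal n a) (X 0), Ideal.Quotient.mk (hirzIdeal n a) (X 1)}) := by
    rw [← SetLike.mem_coe, ← h]
    exact ⟨_, Submodule.subset_span (by simp), rfl⟩
  obtain ⟨p, q, hx⟩ := hirz_span hx'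
  obtain ⟨r, s, hy⟩ := hirz_span hy'
  have hC : ∀ k : ℤ, φ (Ideal.Quotient.mk (hirzIdeal n a') (C k))
      = Ideal.Quotient.mk (hirzIdeal n a) (C k) := by
    intro k; simp
  have key : ∀ α β : ℤ, φ (Ideal.Quotient.mk (hirzIdeal n a') (C α * X 0 + C β * X 1)) =
      Ideal.Quotient.mk (hirzIdeal n a)
        (C (α * p + β * r) * X 0 + C (α * q + β * s) * X 1) := by
    intro α β
    simp only [map_add, map_mul, hC, hx, hy]
    ring
  have surj : ∀ u v : ℤ, ∃ α β : ℤ, α * p + β * r = u ∧ α * q + β * s = v := by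
    intro u v
    have : Ideal.Quotient.mk (hirzIdeal n a) (C u * X 0 + C v * X 1) ∈
        φ '' (Submodule.span ℤ
          {Ideal.Quotient.mk (hirzIdeal n a') (X 0),
           Ideal.Quotient.mk (hirzIdeal n a') (X 1)} :
            Set (MvPolynomial (Fin 2) ℤ ⧸ hirzIdeal n a')) := by
      rw [h, SetLike.mem_coe, Submodule.mem_span_pair]
      exact ⟨u, v, by simp [zsmul_eq_mul]⟩
    obtain ⟨z, hz, hz'⟩ := this
    obtain ⟨α, β, rfl⟩ := hirz_span hz
    refine ⟨α, β, ?_⟩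
    rw [key, ← sub_eq_zero, ← map_sub] at hz'
    have := hirz_lin hn (a := a) (p := α * p + β * r - u) (q := α * q + β * s - v) (by
      rw [← hz']; congr 1; simp only [C_sub]; ring)
    exact ⟨by linarith [this.1], by linarith [this.2]⟩
  obtain ⟨α, β, h1, h2⟩ := surj 1 0
  obtain ⟨γ, δ, h3, h4⟩ := surj 0 1
  have hrel : Ideal.Quotient.mk (hirzIdeal n a') (X 1 * (X 1 + C a' * X 0)) = 0 :=
    Ideal.Quotient.eq_zero_iff_mem.2 (Ideal.subset_span (by simp))
  have hq := congrArg φ hrel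
  rw [map_zero, map_mul, map_mul, map_add, map_add, map_mul, map_mul, hC, hx, hy,
    ← map_mul, ← map_add, ← map_mul] at hq
  obtain ⟨c, hc⟩ := hirz_quad hn hq
  have e1 := hc 1 0
  have e2 := hc 0 1
  have e3 := hc 1 1
  have E1 : r * (r + a' * p) = 0 := by linear_combination e1
  have E2 : s * (s + a' * q) = c := by linear_combination e2
  have E3 : r * (s + a' * q) + s * (r + a' * p) = c * a := by
    linear_combination e3 - e1 - e2
  have hD : (α * δ - β * γ) * (p * s - q * r) = 1 := by
    linear_combination (γ * q + δ * s) * h1 + h4 - (γ * p + δ * r) * h2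
  have hdisc : a' ^ 2 * (p * s - q * r) ^ 2 = c ^ 2 * a ^ 2 := by
    have : a' ^ 2 * (p * s - q * r) ^ 2 = (r * (s + a' * q) + s * (r + a' * p)) ^ 2
      - 4 * (r * (r + a' * p)) * (s * (s + a' * q)) := by ring
    rw [this, E1, E3]; ring
  rw [← Int.pow_dvd_pow_iff (n := 2) (by norm_num)]
  refine ⟨c ^ 2 * (α * δ - β * γ) ^ 2, ?_⟩
  calc a' ^ 2 = a' ^ 2 * ((α * δ - β * γ) * (p * s - q * r)) ^ 2 := by rw [hD]; ring
    _ = (a' ^ 2 * (p * s - q * r) ^ 2) * (α * δ - β * γ) ^ 2 := by ring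
    _ = _ := by rw [hdisc]; ring

lemma hirz_neg (n : ℕ) (a : ℤ) : ∃ φ : (MvPolynomial (Fin 2) ℤ ⧸ hirzIdeal n (-a)) ≃+*
        (MvPolynomial (Fin 2) ℤ ⧸ hirzIdeal n a),
      φ '' (Submodule.span ℤ
          {Ideal.Quotient.mk (hirzIdeal n (-a)) (X 0),
           Ideal.Quotient.mk (hirzIdeal n (-a)) (X 1)} :
            Set (MvPolynomial (Fin 2) ℤ ⧸ hirzIdeal n (-a))) =
        (Submodule.span ℤ
          {Ideal.Quotient.mk (hirzIdeal n a) (X 0),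
           Ideal.Quotient.mk (hirzIdeal n a) (X 1)} :
            Set (MvPolynomial (Fin 2) ℤ ⧸ hirzIdeal n a)) := by
  let g : MvPolynomial (Fin 2) ℤ →ₐ[ℤ] MvPolynomial (Fin 2) ℤ := aeval ![X 0, - X 1]
  have g0 : g (X 0) = X 0 := by simp [g]
  have g1 : g (X 1) = - X 1 := by simp [g]
  have gg : g.comp g = AlgHom.id ℤ _ := by
    apply MvPolynomial.algHom_ext
    intro i
    fin_cases i
    · simp [g0]
    · simp [g1]
  let e : MvPolynomial (Fin 2) ℤ ≃ₐ[ℤ] MvPolynomial (Fin 2) ℤ := AlgEquiv.ofAlgHom g g gg gg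
  have e0 : e (X 0) = X 0 := g0
  have e1 : e (X 1) = - X 1 := g1
  have eC : ∀ k : ℤ, e (C k) = C k := fun k => by simp
  have hI : hirzIdeal n a = (hirzIdeal n (-a)).map (e.toRingEquiv : _ →+* _) := by
    unfold hirzIdeal
    rw [Ideal.map_span, Set.image_pair]
    have h0 : (e.toRingEquiv : MvPolynomial (Fin 2) ℤ →+* MvPolynomial (Fin 2) ℤ) (X 0 ^ (n + 1))
      = X 0 ^ (n + 1) := by
      change e _ = _
      rw [map_pow, e0]
    have h1 : (e.toRingEquiv : MvPolynomial (Fin 2) ℤ →+* MvPolynomial (Fin 2) ℤ)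
        (X 1 * (X 1 + C (-a) * X 0)) = X 1 * (X 1 + C a * X 0) := by
      change e _ = _
      rw [map_mul, map_add, map_mul, e0, e1, eC, C_neg]
      ring
    rw [h0, h1]
  let φ := Ideal.quotientEquiv _ _ e.toRingEquiv hI
  have f0 : φ (Ideal.Quotient.mk _ (X 0)) = Ideal.Quotient.mk _ (X 0) := 
    congrArg (Ideal.Quotient.mk (hirzIdeal n a)) e0
  have f1 : φ (Ideal.Quotient.mk _ (X 1)) = - Ideal.Quotient.mk _ (X 1) := 
    (congrArg (Ideal.Quotient.mk (hirzIdeal n a)) e1).trans (map_neg _ _)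
  refine ⟨φ, ?_⟩
  ext z
  simp only [Set.mem_image, SetLike.mem_coe, Submodule.mem_span_pair]
  constructor
  · rintro ⟨w, ⟨u, v, rfl⟩, rfl⟩
    exact ⟨u, -v, by rw [map_add, map_zsmul, map_zsmul, f0, f1]; simp⟩
  · rintro ⟨u, v, rfl⟩
    exact ⟨_, ⟨u, -v, rfl⟩, by rw [map_add, map_zsmul, map_zsmul, f0, f1]; simp⟩

/-- Case 1 of Theorem 6.1, `n₁ ≥ 2`, `n₂ = 1`: the rings
`ℤ[x,y]/(x^{n+1}, y(y + a'x))` and `ℤ[x,y]/(x^{n+1}, y(y + ax))` are isomorphic as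
graded rings if and only if `a' = ±a`. -/
theorem stmt11 (n : ℕ) (hn : 2 ≤ n) (a a' : ℤ) :
    (∃ φ : (MvPolynomial (Fin 2) ℤ ⧸ hirzIdeal n a') ≃+*
        (MvPolynomial (Fin 2) ℤ ⧸ hirzIdeal n a),
      φ '' (Submodule.span ℤ
          {Ideal.Quotient.mk (hirzIdeal n a') (X 0),
           Ideal.Quotient.mk (hirzIdeal n a') (X 1)} :
            Set (MvPolynomial (Fin 2) ℤ ⧸ hirzIdeal n a')) =
        (Submodule.span ℤ
          {Ideal.Quotient.mk (hirzIdeal n a) (X 0),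
           Ideal.Quotient.mk (hirzIdeal n a) (X 1)} :
            Set (MvPolynomial (Fin 2) ℤ ⧸ hirzIdeal n a))) ↔
    (a' = a ∨ a' = -a) := by
  constructor
  · rintro ⟨φ, h⟩
    have d1 := hirz_dvd n hn a a' φ h
    have d2 := hirz_dvd n hn a' a φ.symm (by
      rw [← h, ← Set.image_comp]
      simp)
    exact Int.natAbs_eq_natAbs_iff.1 (Nat.dvd_antisymm (Int.natAbs_dvd_natAbs.2 d2)
      (Int.natAbs_dvd_natAbs.2 d1))
  · rintro (rfl | rfl)
    · exact ⟨RingEquiv.refl _, by simp⟩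
    · exact hirz_neg n a
end

section
/- Let n_1 ≥ 1 and n_2 ≥ 2 be integers, and let a_1,…,a_{n_2} be integers with a_i ≠ 0 for at least one i. If α, β are integers such that (α x̄ + β ȳ)^{n_1+1} = 0 in the ring ℤ[x,y]/(x^{n_1+1}, y·∏_{i=1}^{n_2}(y + a_i x)), then β = 0. -/
open MvPolynomial

namespace Polynomial

lemma key_div (n₁ n₂ : ℕ) (a : Fin n₂ → ℤ) (α β : ℤ)
    (h : (MvPolynomial.C α * MvPolynomial.X 0 + MvPolynomial.C β * MvPolynomial.X 1) ^ (n₁ + 1)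
      ∈ twoStageIdeal n₁ n₂ a) :
    ∃ (c : ℤ) (B : ℤ[X]), (C α + C β * X) ^ (n₁ + 1)
      = C c + B * (X * ∏ i, (X + C (a i))) := by
  unfold twoStageIdeal at h
  rw [Ideal.mem_span_pair] at h
  obtain ⟨A, B, hAB⟩ := h
  let v : Fin 2 → ℤ[X][X] := ![X, C X * X]
  let φ : MvPolynomial (Fin 2) ℤ →ₐ[ℤ] ℤ[X][X] := MvPolynomial.aeval v
  have h0 : φ (MvPolynomial.X 0) = X := by simp [φ, v]
  have h1 : φ (MvPolynomial.X 1) = C X * X := by simp [φ, v]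
  have hC : ∀ c : ℤ, φ (MvPolynomial.C c) = C (C c) := by
    intro c
    simp [φ]
  have key := congrArg φ hAB
  simp only [map_add, map_mul, map_pow, map_prod, h0, h1, hC] at key
  have e1 : (C (C α) * X + C (C β) * (C X * X) : ℤ[X][X]) ^ (n₁ + 1)
      = C ((C α + C β * X) ^ (n₁ + 1)) * X ^ (n₁ + 1) := by
    rw [C_pow, ← mul_pow]
    congr 1
    simp only [C_add, C_mul]
    ring
  have e2 : (∏ i, (C X * X + C (C (a i)) * X) : ℤ[X][X])
      = C (∏ i, (X + C (a i))) * X ^ n₂ := by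
    rw [map_prod]
    have : (X : ℤ[X][X]) ^ n₂ = ∏ _i : Fin n₂, X := by simp
    rw [this, ← Finset.prod_mul_distrib]
    refine Finset.prod_congr rfl fun i _ => ?_
    simp only [C_add]
    ring
  have e3 : φ B * (C X * X * (C (∏ i, (X + C (a i))) * X ^ n₂))
      = C (X * ∏ i, (X + C (a i))) * (φ B * X ^ (n₂ + 1)) := by
    rw [C_mul]
    ring
  have hA : (φ A).coeff 0 = C (MvPolynomial.constantCoeff A) := by
    clear key hAB
    induction A using MvPolynomial.induction_on with
    | C c => simp [hC]
    | add p q hp hq => simp [hp, hq]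
    | mul_X p i hp => fin_cases i <;> simp [h0, h1, ← mul_assoc]
  rw [e1, e2, e3] at key
  have k2 := congrArg (fun p => coeff p (n₁ + 1)) key
  simp only [coeff_add, coeff_C_mul, coeff_X_pow_self, mul_one] at k2
  have := coeff_mul_X_pow (φ A) (n₁ + 1) 0
  rw [zero_add] at this
  rw [this, hA] at k2
  exact ⟨_, (φ B * X ^ (n₂ + 1)).coeff (n₁ + 1), by rw [← k2]; ring⟩

lemma pow_cases {x y : ℤ} {n : ℕ} (h : x ^ (n + 1) = y ^ (n + 1)) : x = y ∨ x = -y := by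
  have : |x| ^ (n + 1) = |y| ^ (n + 1) := by rw [← abs_pow, ← abs_pow, h]
  exact abs_eq_abs.mp ((pow_left_inj₀ (abs_nonneg x) (abs_nonneg y) (Nat.succ_ne_zero n)).mp this)

lemma dbl (n : ℕ) (α β c b : ℤ) (R : ℤ[X])
    (h : (C α + C β * X) ^ (n + 1) = C c + (X + C b) ^ 2 * R) (hβ : β ≠ 0) :
    α - β * b = 0 := by
  have h2 := congrArg (fun p => eval (-b) (derivative p)) h
  simp [derivative_pow] at h2
  have h3 : ((n:ℤ) + 1) ≠ 0 := by positivity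
  rcases h2 with (h2 | h2) | h2
  · exact absurd h2 h3
  · linarith [h2.1]
  · exact absurd h2 hβ

end Polynomial

/-- Lemma 6.2: if `n₂ ≥ 2` and some `aᵢ ≠ 0`, then
`(α x̄ + β ȳ)^{n₁+1} = 0` in `ℤ[x,y]/(x^{n₁+1}, y ∏ (y + aᵢ x))` forces `β = 0`. -/
theorem stmt13 (n₁ n₂ : ℕ) (hn₁ : 1 ≤ n₁) (hn₂ : 2 ≤ n₂) (a : Fin n₂ → ℤ)
    (ha : ∃ i, a i ≠ 0) (α β : ℤ)
    (h : (Ideal.Quotient.mk (twoStageIdeal n₁ n₂ a) (C α * X 0 + C β * X 1)) ^ (n₁ + 1)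
      = 0) :
    β = 0 := by
  rw [← map_pow, Ideal.Quotient.eq_zero_iff_mem] at h
  obtain ⟨c, B, hB⟩ := Polynomial.key_div n₁ n₂ a α β h
  by_contra hβ
  obtain ⟨i, hi⟩ := ha
  obtain ⟨j, hj⟩ : ∃ j, j ≠ i := by
    have : Nontrivial (Fin n₂) := Fin.nontrivial_iff_two_le.mpr hn₂
    exact exists_ne i
  have hc : α ^ (n₁ + 1) = c := by
    have := congrArg (Polynomial.eval 0) hB
    simpa using this
  have hr : ∀ k, (α - β * a k) ^ (n₁ + 1) = α ^ (n₁ + 1) := by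
    intro k
    have := congrArg (Polynomial.eval (-a k)) hB
    have hz : ∏ l, (-a k + a l) = 0 :=
      Finset.prod_eq_zero (Finset.mem_univ k) (by ring)
    simp [Polynomial.eval_prod, hz] at this
    rw [hc, ← this]
    ring
  have hii : α - β * a i = -α := by
    rcases Polynomial.pow_cases (hr i) with h1 | h1
    · have : β * a i = 0 := by linarith
      simp [hβ, hi] at this
    · exact h1
  have hα : α ≠ 0 := by
    rintro rfl
    have : β * a i = 0 := by linarith
    simp [hβ, hi] at this
  have hp : ∃ R : Polynomial ℤ, ∏ l, (Polynomial.X + Polynomial.C (a l))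
      = (Polynomial.X + Polynomial.C (a i)) * ((Polynomial.X + Polynomial.C (a j)) * R) := by
    rw [← Finset.mul_prod_erase _ _ (Finset.mem_univ i),
      ← Finset.mul_prod_erase _ _ (Finset.mem_erase.mpr ⟨hj, Finset.mem_univ j⟩)]
    exact ⟨_, rfl⟩
  obtain ⟨R, hR⟩ := hp
  rw [hR] at hB
  rcases Polynomial.pow_cases (hr j) with h1 | h1
  · have h2 : a j = 0 := by
      have : β * a j = 0 := by linarith
      simpa [hβ] using this
    have := Polynomial.dbl n₁ α β c 0 (B * (Polynomial.X + Polynomial.C (a i)) * R)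
      (by rw [hB, h2]; simp only [Polynomial.C_0]; ring) hβ
    simp at this
    exact hα this
  · have h2 : a j = a i := mul_left_cancel₀ hβ (by linarith)
    have := Polynomial.dbl n₁ α β c (a i) (B * Polynomial.X * R) (by rw [hB, h2]; ring) hβ
    apply hα
    linarith
end

section
/- Let n_1 > n_2 ≥ 1 be integers and let a_1,…,a_{n_2} be integers with a_i ≠ 0 for at least one i. Then for every pair of integers (α, β) ≠ (0, 0), one has (α x̄ + β ȳ)^{n_1} ≠ 0 in the ring ℤ[x,y]/(x^{n_1+1}, y·∏_{i=1}^{n_2}(y + a_i x)). -/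
open MvPolynomial

/-- Restricting to a line `y = c x` on which the second generator vanishes. -/
lemma stmt14_aux (n₁ n₂ : ℕ) (a : Fin n₂ → ℤ) (α β c : ℤ)
    (hc : c * ∏ i, (c + a i) = 0)
    (h : (Ideal.Quotient.mk (twoStageIdeal n₁ n₂ a) (C α * X 0 + C β * X 1)) ^ n₁ = 0) :
    α + β * c = 0 := by
  rw [← map_pow, Ideal.Quotient.eq_zero_iff_mem] at h
  let φ : MvPolynomial (Fin 2) ℤ →+* Polynomial ℤ :=
    eval₂Hom Polynomial.C ![Polynomial.X, Polynomial.C c * Polynomial.X]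
  have h0 : φ (X 0) = Polynomial.X := by simp [φ]
  have h1 : φ (X 1) = Polynomial.C c * Polynomial.X := by simp [φ]
  have hC : ∀ z, φ (C z) = Polynomial.C z := fun z => by simp [φ]
  have hle : twoStageIdeal n₁ n₂ a ≤
      (Ideal.span {(Polynomial.X : Polynomial ℤ) ^ (n₁ + 1)}).comap φ := by
    unfold twoStageIdeal
    rw [Ideal.span_le]
    rintro p (rfl | rfl)
    · simp only [SetLike.mem_coe, Ideal.mem_comap, map_pow, h0]
      exact Ideal.subset_span rfl
    · simp only [SetLike.mem_coe, Ideal.mem_comap]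
      have : φ (X 1 * ∏ i, (X 1 + C (a i) * X 0)) = 0 := by
        simp only [map_mul, map_prod, map_add, h0, h1, hC]
        simp only [← add_mul, ← Polynomial.C_add]
        rw [Finset.prod_mul_distrib, ← map_prod, mul_mul_mul_comm, ← Polynomial.C_mul, hc]
        simp
      rw [this]
      exact zero_mem _
  have h2 := hle h
  rw [Ideal.mem_comap, Ideal.mem_span_singleton, Polynomial.X_pow_dvd_iff] at h2
  have h3 := h2 n₁ (Nat.lt_succ_self _)
  have h4 : φ ((C α * X 0 + C β * X 1) ^ n₁) =
      Polynomial.C ((α + β * c) ^ n₁) * Polynomial.X ^ n₁ := by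
    simp only [map_pow, map_add, map_mul, h0, h1, hC]
    rw [← mul_pow]
    ring
  rw [h4, Polynomial.coeff_C_mul_X_pow, if_pos rfl] at h3
  by_contra hne
  exact pow_ne_zero _ hne h3

/-- key claim in the proof of Corollary 6.3: if `n₁ > n₂ ≥ 1` and some
`aᵢ ≠ 0`, then no nonzero degree-2 element `α x̄ + β ȳ` of
`ℤ[x,y]/(x^{n₁+1}, y ∏ (y + aᵢ x))` has vanishing `n₁`-th power. -/
theorem stmt14 (n₁ n₂ : ℕ) (hn₂ : 1 ≤ n₂) (hn : n₂ < n₁) (a : Fin n₂ → ℤ)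
    (ha : ∃ i, a i ≠ 0) (α β : ℤ) (hαβ : ¬(α = 0 ∧ β = 0)) :
    (Ideal.Quotient.mk (twoStageIdeal n₁ n₂ a) (C α * X 0 + C β * X 1)) ^ n₁ ≠ 0 := by
  intro h
  have hα : α = 0 := by
    simpa using stmt14_aux n₁ n₂ a α β 0 (by simp) h
  obtain ⟨i, hi⟩ := ha
  have h2 := stmt14_aux n₁ n₂ a α β (-a i)
    (by rw [Finset.prod_eq_zero (Finset.mem_univ i) (by simp), mul_zero]) h
  refine hαβ ⟨hα, ?_⟩
  rw [hα, zero_add] at h2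
  exact (mul_eq_zero.mp h2).resolve_right (neg_ne_zero.mpr hi)
end

section
/- Let a, b, c be integers and let R = ℚ[y_1,y_2,y_3]/(y_1², y_2(a y_1 + y_2), y_3(b y_1 + c y_2 + y_3)). Then there exist rational numbers q_1, q_2, q_3 with q_3 ≠ 0 such that (q_1 ȳ_1 + q_2 ȳ_2 + q_3 ȳ_3)² = 0 in R if and only if c(2b − ac) = 0. -/
open MvPolynomial

/-- The ideal `(y₁², y₂(a y₁ + y₂), y₃(b y₁ + c y₂ + y₃))` of `ℚ[y₁,y₂,y₃]` (with
`yᵢ = X (i-1)`), defining the rational cohomology ring of the 3-stage Bott manifold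
with twisting data `(a, b, c)`. -/
noncomputable def bott3Ideal (a b c : ℤ) : Ideal (MvPolynomial (Fin 3) ℚ) :=
  Ideal.span {X 0 ^ 2, X 1 * (C (a : ℚ) * X 0 + X 1),
    X 2 * (C (b : ℚ) * X 0 + C (c : ℚ) * X 1 + X 2)}

/-- equivalence (2) ⇔ (3) of Lemma 7.2: the rational cohomology ring of
a 3-stage Bott manifold has a square-zero degree-2 element with nonzero `ȳ₃`-coefficient
if and only if `c(2b − ac) = 0`. -/
theorem stmt15 (a b c : ℤ) :
    (∃ q₁ q₂ q₃ : ℚ, q₃ ≠ 0 ∧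
      (Ideal.Quotient.mk (bott3Ideal a b c) (C q₁ * X 0 + C q₂ * X 1 + C q₃ * X 2)) ^ 2
        = 0) ↔
    c * (2 * b - a * c) = 0 := by
  rw [show (∃ q₁ q₂ q₃ : ℚ, q₃ ≠ 0 ∧
      (Ideal.Quotient.mk (bott3Ideal a b c) (C q₁ * X 0 + C q₂ * X 1 + C q₃ * X 2)) ^ 2
        = 0) ↔ (∃ q₁ q₂ q₃ : ℚ, q₃ ≠ 0 ∧
      ∃ p₁ p₂ p₃ : MvPolynomial (Fin 3) ℚ, p₁ * X 0 ^ 2 + (p₂ * (X 1 * (C (a : ℚ) * X 0 + X 1)) +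
        p₃ * (X 2 * (C (b : ℚ) * X 0 + C (c : ℚ) * X 1 + X 2))) =
        (C q₁ * X 0 + C q₂ * X 1 + C q₃ * X 2) ^ 2) by
    refine exists_congr fun q₁ => exists_congr fun q₂ => exists_congr fun q₃ =>
      and_congr_right fun _ => ?_
    rw [← map_pow, Ideal.Quotient.eq_zero_iff_mem]
    simp only [bott3Ideal, Ideal.mem_span_insert, Ideal.mem_span_singleton']
    constructor
    · rintro ⟨p₁, z, ⟨p₂, w, ⟨p₃, rfl⟩, rfl⟩, h⟩
      exact ⟨p₁, p₂, p₃, h.symm⟩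
    · rintro ⟨p₁, p₂, p₃, h⟩
      exact ⟨p₁, _, ⟨p₂, _, ⟨p₃, rfl⟩, rfl⟩, h.symm⟩]
  constructor
  · rintro ⟨q₁, q₂, q₃, hq, p₁, p₂, p₃, h⟩
    have key : ∀ v : Fin 3 → ℚ, 
        eval 0 p₁ * v 0 ^ 2 + (eval 0 p₂ * (v 1 * (a * v 0 + v 1)) +
          eval 0 p₃ * (v 2 * (b * v 0 + c * v 1 + v 2))) =
        (q₁ * v 0 + q₂ * v 1 + q₃ * v 2) ^ 2 := by
      intro v
      let φ : MvPolynomial (Fin 3) ℚ →ₐ[ℚ] Polynomial ℚ :=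
        aeval (fun i => Polynomial.C (v i) * Polynomial.X)
      have h0 : ∀ p, Polynomial.eval 0 (φ p) = eval 0 p := by
        intro p
        have : (Polynomial.evalRingHom 0).comp φ.toRingHom = (eval (0 : Fin 3 → ℚ)) := by
          apply MvPolynomial.ringHom_ext
          · intro r; simp [φ]
          · intro i; simp [φ]
        exact congrArg (fun g => g p) this
      have hC : ∀ r, φ (C r) = Polynomial.C r := fun r => by simp [φ]
      have hX : ∀ i, φ (X i) = Polynomial.C (v i) * Polynomial.X := fun r => by simp [φ]
      have h1 := congrArg φ h
      simp only [map_add, map_mul, map_pow, hC, hX] at h1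
      have h2 : (Polynomial.X : Polynomial ℚ) ^ 2 * (φ p₁ * Polynomial.C (v 0) ^ 2 +
          (φ p₂ * (Polynomial.C (v 1) * (Polynomial.C (a : ℚ) * Polynomial.C (v 0) +
            Polynomial.C (v 1))) +
          φ p₃ * (Polynomial.C (v 2) * (Polynomial.C (b : ℚ) * Polynomial.C (v 0) +
            Polynomial.C (c : ℚ) * Polynomial.C (v 1) + Polynomial.C (v 2))))) =
          Polynomial.X ^ 2 * (Polynomial.C q₁ * Polynomial.C (v 0) +
            Polynomial.C q₂ * Polynomial.C (v 1) + Polynomial.C q₃ * Polynomial.C (v 2)) ^ 2 := by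
        linear_combination h1
      have h3 := mul_left_cancel₀ (pow_ne_zero 2 Polynomial.X_ne_zero) h2
      have h4 := congrArg (Polynomial.eval 0) h3
      simpa only [Polynomial.eval_add, Polynomial.eval_mul, Polynomial.eval_pow,
        Polynomial.eval_C, h0] using h4
    have e1 := key ![1, 0, 0]
    have e2 := key ![0, 1, 0]
    have e3 := key ![0, 0, 1]
    have e12 := key ![1, 1, 0]
    have e13 := key ![1, 0, 1]
    have e23 := key ![0, 1, 1]
    simp at e1 e2 e3 e12 e13 e23
    rw [e1, e2] at e12
    rw [e1, e3] at e13
    rw [e2, e3] at e23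
    have f1 : 2 * q₁ = b * q₃ := mul_right_cancel₀ hq (by linear_combination -e13)
    have f2 : 2 * q₂ = c * q₃ := mul_right_cancel₀ hq (by linear_combination -e23)
    have f3 : 2 * q₁ * q₂ = a * q₂ ^ 2 := by linear_combination -e12
    have : (c * (2 * b - a * c) : ℚ) = 0 := by
      have : q₃ ^ 2 * (c * (2 * b - a * c) : ℚ) = 0 := by
        linear_combination 4 * f3 * 1 - 2 * c * q₃ * f1 - 4 * q₁ * f2 + a * (2 * q₂ + c * q₃) * f2
      exact (mul_eq_zero.mp this).resolve_left (pow_ne_zero 2 hq)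
    exact_mod_cast this
  · intro h
    have h' : (c * (2 * b - a * c) : ℚ) = 0 := by exact_mod_cast h
    have hC := congrArg (C : ℚ → MvPolynomial (Fin 3) ℚ) h'
    simp only [map_mul, map_sub, map_zero] at hC
    refine ⟨b, c, 2, two_ne_zero, C (b : ℚ) ^ 2, C (c : ℚ) ^ 2, 4, ?_⟩
    have h2 : (C (2 : ℚ) : MvPolynomial (Fin 3) ℚ) = 2 := map_ofNat C 2
    rw [h2] at hC ⊢
    linear_combination - X 0 * X 1 * hC
end

section
/- Let a, b, c be integers and let R = ℚ[y_1,y_2,y_3]/(y_1², y_2(a y_1 + y_2), y_3(b y_1 + c y_2 + y_3)). Then there exists a ℚ-algebra isomorphism ℚ[x_1,x_2,x_3]/(x_1², x_2², x_3²) → R mapping the ℚ-span of {x̄_1, x̄_2, x̄_3} onto the ℚ-span of {ȳ_1, ȳ_2, ȳ_3} if and only if c(2b − ac) = 0. -/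
open MvPolynomial

/-- The ideal `(x₁², x₂², x₃²)` of `ℚ[x₁,x₂,x₃]`, defining the rational cohomology ring
of `(ℂP¹)³`. -/
noncomputable def cubeIdeal : Ideal (MvPolynomial (Fin 3) ℚ) :=
  Ideal.span (Set.range fun i => X i ^ 2)

/-- First partial derivatives at the origin vanish on the ideal. -/
lemma bott3_first (a b c : ℤ) (f : MvPolynomial (Fin 3) ℚ) (hf : f ∈ bott3Ideal a b c)
    (i : Fin 3) : eval 0 (pderiv i f) = 0 := by
  rw [bott3Ideal, Ideal.mem_span_insert] at hf
  obtain ⟨A, z, hz, rfl⟩ := hf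
  rw [Ideal.mem_span_pair] at hz
  obtain ⟨B, D, rfl⟩ := hz
  simp [Derivation.leibniz, pow_two]

/-- Second partial derivatives at the origin of an element of the ideal. -/
lemma bott3_second (a b c : ℤ) (f : MvPolynomial (Fin 3) ℚ) (hf : f ∈ bott3Ideal a b c) :
    2 * eval 0 (pderiv 0 (pderiv 1 f)) = a * eval 0 (pderiv 1 (pderiv 1 f)) ∧
    2 * eval 0 (pderiv 0 (pderiv 2 f)) = b * eval 0 (pderiv 2 (pderiv 2 f)) ∧
    2 * eval 0 (pderiv 1 (pderiv 2 f)) = c * eval 0 (pderiv 2 (pderiv 2 f)) := by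
  rw [bott3Ideal, Ideal.mem_span_insert] at hf
  obtain ⟨A, z, hz, rfl⟩ := hf
  rw [Ideal.mem_span_pair] at hz
  obtain ⟨B, D, rfl⟩ := hz
  refine ⟨?_, ?_, ?_⟩ <;>
    simp [Derivation.leibniz, pow_two, pderiv_X, Pi.single_apply] <;> ring

/-- A square-zero linear form with non-zero `y₃`-coefficient forces the condition. -/
lemma bott3_sq (a b c : ℤ) (p q r : ℚ) (hr : r ≠ 0)
    (h : (C p * X 0 + C q * X 1 + C r * X 2) ^ 2 ∈ bott3Ideal a b c) :
    c * (2 * b - a * c) = 0 := by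
  obtain ⟨h1, h2, h3⟩ := bott3_second a b c _ h
  simp [Derivation.leibniz, pow_two, pderiv_X, Pi.single_apply] at h1 h2 h3
  have hp : 2 * p = b * r := by
    apply mul_right_cancel₀ hr
    linarith
  have hq : 2 * q = c * r := by
    apply mul_right_cancel₀ hr
    linarith
  have hp' : p = b * r / 2 := by linarith
  have hq' : q = c * r / 2 := by linarith
  subst hp' hq'
  have : ((c * (2 * b - a * c) : ℤ) : ℚ) = 0 := by
    push_cast
    have h4 : r ^ 2 ≠ 0 := pow_ne_zero 2 hr
    apply mul_right_cancel₀ h4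
    linarith
  exact_mod_cast this

lemma mem_span_lin (I : Ideal (MvPolynomial (Fin 3) ℚ)) (z : MvPolynomial (Fin 3) ℚ ⧸ I) :
    z ∈ Submodule.span ℚ (Set.range fun i => Ideal.Quotient.mk I (X i)) ↔
      ∃ p q r : ℚ, z = Ideal.Quotient.mk I (C p * X 0 + C q * X 1 + C r * X 2) := by
  have key : ∀ (p : ℚ) (i : Fin 3), p • Ideal.Quotient.mk I (X i)
      = Ideal.Quotient.mk I (C p * X i) := by
    intro p i
    rw [← smul_eq_C_mul]
    rfl
  rw [Submodule.mem_span_range_iff_exists_fun]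
  constructor
  · rintro ⟨d, rfl⟩
    refine ⟨d 0, d 1, d 2, ?_⟩
    simp only [Fin.sum_univ_three, key, map_add]
  · rintro ⟨p, q, r, rfl⟩
    refine ⟨![p, q, r], ?_⟩
    simp only [Fin.sum_univ_three, key, map_add]
    rfl

lemma bott3_forward (a b c : ℤ)
    (φ : (MvPolynomial (Fin 3) ℚ ⧸ cubeIdeal) ≃ₐ[ℚ] (MvPolynomial (Fin 3) ℚ ⧸ bott3Ideal a b c))
    (h : φ '' (Submodule.span ℚ
          (Set.range fun i => Ideal.Quotient.mk cubeIdeal (X i)) :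
            Set (MvPolynomial (Fin 3) ℚ ⧸ cubeIdeal)) =
        (Submodule.span ℚ
          (Set.range fun i => Ideal.Quotient.mk (bott3Ideal a b c) (X i)) :
            Set (MvPolynomial (Fin 3) ℚ ⧸ bott3Ideal a b c))) :
    c * (2 * b - a * c) = 0 := by
  have h1 : ∀ i, ∃ p q r : ℚ, φ (Ideal.Quotient.mk cubeIdeal (X i)) =
      Ideal.Quotient.mk (bott3Ideal a b c) (C p * X 0 + C q * X 1 + C r * X 2) := by
    intro i
    rw [← mem_span_lin, ← SetLike.mem_coe, ← h]
    exact Set.mem_image_of_mem _ (Submodule.subset_span ⟨i, rfl⟩)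
  choose p q r hpqr using h1
  by_cases hr : ∃ i, r i ≠ 0
  · obtain ⟨i, hi⟩ := hr
    apply bott3_sq a b c (p i) (q i) (r i) hi
    rw [← Ideal.Quotient.eq_zero_iff_mem, map_pow, ← hpqr, ← map_pow, ← map_pow]
    have : (Ideal.Quotient.mk cubeIdeal) (X i ^ 2) = 0 := by
      rw [Ideal.Quotient.eq_zero_iff_mem]
      exact Ideal.subset_span ⟨i, rfl⟩
    rw [this, map_zero]
  · push Not at hr
    exfalso
    have h2 : Ideal.Quotient.mk (bott3Ideal a b c) (X 2) ∈ φ '' (Submodule.span ℚ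
          (Set.range fun i => Ideal.Quotient.mk cubeIdeal (X i)) :
            Set (MvPolynomial (Fin 3) ℚ ⧸ cubeIdeal)) := by
      rw [h]
      exact Submodule.subset_span ⟨2, rfl⟩
    obtain ⟨z, hz, hz2⟩ := h2
    rw [SetLike.mem_coe, Submodule.mem_span_range_iff_exists_fun] at hz
    obtain ⟨d, rfl⟩ := hz
    rw [map_sum] at hz2
    simp only [map_smul, hpqr, hr] at hz2
    have h3 : ∀ (t : ℚ) (f : MvPolynomial (Fin 3) ℚ),
        t • Ideal.Quotient.mk (bott3Ideal a b c) f
          = Ideal.Quotient.mk (bott3Ideal a b c) (C t * f) := by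
      intro t f
      rw [← smul_eq_C_mul]
      rfl
    simp only [h3] at hz2
    rw [← map_sum, Ideal.Quotient.eq] at hz2
    have h4 := bott3_first a b c _ hz2 2
    simp [Derivation.leibniz, pderiv_X, Pi.single_apply, Fin.sum_univ_three] at h4

lemma bott3_backward (a b c : ℤ) (h : c * (2 * b - a * c) = 0) :
    ∃ φ : (MvPolynomial (Fin 3) ℚ ⧸ cubeIdeal) ≃ₐ[ℚ]
        (MvPolynomial (Fin 3) ℚ ⧸ bott3Ideal a b c),
      φ '' (Submodule.span ℚ
          (Set.range fun i => Ideal.Quotient.mk cubeIdeal (X i)) :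
            Set (MvPolynomial (Fin 3) ℚ ⧸ cubeIdeal)) =
        (Submodule.span ℚ
          (Set.range fun i => Ideal.Quotient.mk (bott3Ideal a b c) (X i)) :
            Set (MvPolynomial (Fin 3) ℚ ⧸ bott3Ideal a b c)) := by
  have hQ : (c : ℚ) * (2 * b - a * c) = 0 := by exact_mod_cast h
  set I := bott3Ideal a b c with hI
  set J := cubeIdeal with hJ
  let u : Fin 3 → MvPolynomial (Fin 3) ℚ :=
    ![X 0, X 1 + C ((a : ℚ) / 2) * X 0, X 2 + C ((b : ℚ) / 2) * X 0 + C ((c : ℚ) / 2) * X 1]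
  let v : Fin 3 → MvPolynomial (Fin 3) ℚ :=
    ![X 0, X 1 - C ((a : ℚ) / 2) * X 0,
      X 2 - C ((b : ℚ) / 2) * X 0 - C ((c : ℚ) / 2) * (X 1 - C ((a : ℚ) / 2) * X 0)]
  have two : ∀ t : ℚ, C t = 2 * (C (t / 2) : MvPolynomial (Fin 3) ℚ) := by
    intro t
    rw [show (2 : MvPolynomial (Fin 3) ℚ) = C 2 from (map_ofNat C 2).symm, ← C_mul]
    congr 1
    ring
  have hQ' : (C ((c : ℚ) / 2) : MvPolynomial (Fin 3) ℚ) *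
      (C ((b : ℚ) / 2) * 2 - C (a : ℚ) * C ((c : ℚ) / 2)) = 0 := by
    rw [show (2 : MvPolynomial (Fin 3) ℚ) = C 2 from (map_ofNat C 2).symm, ← C_mul, ← C_mul,
      ← C_sub, ← C_mul, ← C_0]
    congr 1
    linear_combination hQ / 4
  have i0 : X 0 ^ 2 ∈ I := Ideal.subset_span (by simp)
  have i1 : X 1 * (C (a : ℚ) * X 0 + X 1) ∈ I := Ideal.subset_span (by simp)
  have i2 : X 2 * (C (b : ℚ) * X 0 + C (c : ℚ) * X 1 + X 2) ∈ I := Ideal.subset_span (by simp)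
  have j : ∀ i, X i ^ 2 ∈ J := fun i => Ideal.subset_span ⟨i, rfl⟩
  have hu : ∀ f ∈ J, (Ideal.Quotient.mkₐ ℚ I).comp (aeval u) f = 0 := by
    intro f hf
    have : J ≤ RingHom.ker ((Ideal.Quotient.mkₐ ℚ I).comp (aeval u)) := by
      rw [hJ, cubeIdeal, Ideal.span_le]
      rintro _ ⟨i, rfl⟩
      simp only [SetLike.mem_coe, RingHom.mem_ker, AlgHom.comp_apply, map_pow, aeval_X]
      rw [← map_pow, Ideal.Quotient.mkₐ_eq_mk, Ideal.Quotient.eq_zero_iff_mem]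
      fin_cases i
      · exact i0
      · have e : u 1 ^ 2 = X 1 * (C (a : ℚ) * X 0 + X 1) + C ((a : ℚ) / 2) ^ 2 * X 0 ^ 2 := by
          simp only [u, Matrix.cons_val]
          rw [two a]
          ring
        change u 1 ^ 2 ∈ I
        rw [e]
        exact I.add_mem i1 (I.mul_mem_left _ i0)
      · have e : u 2 ^ 2 = X 2 * (C (b : ℚ) * X 0 + C (c : ℚ) * X 1 + X 2)
            + (C ((b : ℚ) / 2) ^ 2 * X 0 ^ 2
            + C ((c : ℚ) / 2) ^ 2 * (X 1 * (C (a : ℚ) * X 0 + X 1))) := by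
          simp only [u, Matrix.cons_val]
          rw [two b, two c]
          linear_combination hQ' * X 0 * X 1
        change u 2 ^ 2 ∈ I
        rw [e]
        exact I.add_mem i2 (I.add_mem (I.mul_mem_left _ i0) (I.mul_mem_left _ i1))
    exact this hf
  have hv : ∀ f ∈ I, (Ideal.Quotient.mkₐ ℚ J).comp (aeval v) f = 0 := by
    intro f hf
    have : I ≤ RingHom.ker ((Ideal.Quotient.mkₐ ℚ J).comp (aeval v)) := by
      rw [hI, bott3Ideal, Ideal.span_le]
      rintro g hg
      simp only [SetLike.mem_coe, RingHom.mem_ker, AlgHom.comp_apply]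
      rw [Ideal.Quotient.mkₐ_eq_mk, Ideal.Quotient.eq_zero_iff_mem]
      rcases hg with rfl | rfl | rfl
      · simpa [v] using j 0
      · have e : aeval v (X 1 * (C (a : ℚ) * X 0 + X 1)) =
            X 1 ^ 2 - C ((a : ℚ) / 2) ^ 2 * X 0 ^ 2 := by
          simp only [map_mul, map_add, aeval_X, v, Matrix.cons_val, algHom_C, algebraMap_eq]
          rw [two a]
          ring
        rw [e]
        exact J.sub_mem (j 1) (J.mul_mem_left _ (j 0))
      · have e : aeval v (X 2 * (C (b : ℚ) * X 0 + C (c : ℚ) * X 1 + X 2)) =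
            X 2 ^ 2 - ((C ((b : ℚ) / 2) - C ((c : ℚ) / 2) * C ((a : ℚ) / 2)) ^ 2 * X 0 ^ 2
              + C ((c : ℚ) / 2) ^ 2 * X 1 ^ 2) := by
          simp only [map_mul, map_add, aeval_X, v, Matrix.cons_val, algHom_C, algebraMap_eq]
          rw [two a] at hQ'
          rw [two b, two c]
          linear_combination (-hQ') * X 0 * X 1
        rw [e]
        exact J.sub_mem (j 2) (J.add_mem (J.mul_mem_left _ (j 0)) (J.mul_mem_left _ (j 1)))
    exact this hf
  let F := Ideal.Quotient.liftₐ J _ hu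
  let G := Ideal.Quotient.liftₐ I _ hv
  have hF : ∀ f, F (Ideal.Quotient.mk J f) = Ideal.Quotient.mk I (aeval u f) := fun f => rfl
  have hG : ∀ f, G (Ideal.Quotient.mk I f) = Ideal.Quotient.mk J (aeval v f) := fun f => rfl
  have huv : ∀ i, aeval u (v i) = X i := by
    intro i
    fin_cases i <;> simp [u, v, aeval_X, algHom_C] <;> ring
  have hvu : ∀ i, aeval v (u i) = X i := by
    intro i
    fin_cases i <;> simp [u, v, algHom_C]
    ring
  have hFG : F.comp G = AlgHom.id ℚ _ := by
    apply Ideal.Quotient.algHom_ext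
    apply MvPolynomial.algHom_ext
    intro i
    change F (G (Ideal.Quotient.mk I (X i))) = Ideal.Quotient.mk I (X i)
    rw [hG, hF, aeval_X, huv]
  have hGF : G.comp F = AlgHom.id ℚ _ := by
    apply Ideal.Quotient.algHom_ext
    apply MvPolynomial.algHom_ext
    intro i
    change G (F (Ideal.Quotient.mk J (X i))) = Ideal.Quotient.mk J (X i)
    rw [hF, hG, aeval_X, hvu]
  have hGF' : ∀ x, F (G x) = x := fun x => DFunLike.congr_fun hFG x
  refine ⟨AlgEquiv.ofAlgHom F G hFG hGF, ?_⟩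
  ext z
  simp only [Set.mem_image, SetLike.mem_coe]
  constructor
  · rintro ⟨x, hx, rfl⟩
    rw [mem_span_lin] at hx ⊢
    obtain ⟨p, q, r, rfl⟩ := hx
    refine ⟨p + q * (a / 2) + r * (b / 2), q + r * (c / 2), r, ?_⟩
    rw [AlgEquiv.ofAlgHom_apply]
    rw [hF]
    congr 1
    simp only [map_mul, map_add, aeval_X, u, Matrix.cons_val, algHom_C, algebraMap_eq]
    ring
  · intro hz
    refine ⟨G z, ?_, hGF' z⟩
    rw [mem_span_lin] at hz ⊢
    obtain ⟨p, q, r, rfl⟩ := hz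
    refine ⟨p - q * (a / 2) - r * (b / 2) + r * (c / 2) * (a / 2), q - r * (c / 2), r, ?_⟩
    rw [hG]
    congr 1
    simp only [map_mul, map_add, map_sub, aeval_X, v, Matrix.cons_val, algHom_C, algebraMap_eq]
    ring

/-- equivalence (1) ⇔ (3) of Lemma 7.2: the rational cohomology ring of
a 3-stage Bott manifold is isomorphic, as a graded ℚ-algebra, to that of `(ℂP¹)³` if and
only if `c(2b − ac) = 0`. -/
theorem stmt16 (a b c : ℤ) :
    (∃ φ : (MvPolynomial (Fin 3) ℚ ⧸ cubeIdeal) ≃ₐ[ℚ]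
        (MvPolynomial (Fin 3) ℚ ⧸ bott3Ideal a b c),
      φ '' (Submodule.span ℚ
          (Set.range fun i => Ideal.Quotient.mk cubeIdeal (X i)) :
            Set (MvPolynomial (Fin 3) ℚ ⧸ cubeIdeal)) =
        (Submodule.span ℚ
          (Set.range fun i => Ideal.Quotient.mk (bott3Ideal a b c) (X i)) :
            Set (MvPolynomial (Fin 3) ℚ ⧸ bott3Ideal a b c))) ↔
    c * (2 * b - a * c) = 0 := by
  exact ⟨fun ⟨φ, h⟩ => bott3_forward a b c φ h, bott3_backward a b c⟩
end
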